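/- arXiv:math-ph/0702093 — 2 statements merged into one kernel-verified Lean document; each statement's English description precedes it below -/
import Mathlib

section
/- Suppose 0 ≤ V₀(x) ≤ C for all x and V₀(x) → C as |x| → ∞, with 0 < C < ∞. Then for each j ∈ ℕ, the j-th eigenvalue ω_j(k) of h₀(k) = p_x² + (Bx-k)² + V₀(x) satisfies lim_{|k|→∞} ω_j(k) = (2j+1)B + C. -/
open MeasureTheory Filter

/-- `ω` is an eigenvalue of the fibered operator `h₀(k) = p_x² + (Bx-k)² + V₀(x)`. -/
def IsEigenvalue (B : ℝ) (V₀ : ℝ → ℝ) (k ω : ℝ) : Prop :=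
  ∃ φ : ℝ → ℝ, ContDiff ℝ 2 φ ∧ φ ≠ 0 ∧ Integrable (fun x => (φ x) ^ 2) ∧
    ∀ x, -(deriv (deriv φ) x) + ((B * x - k) ^ 2 + V₀ x) * φ x = ω * φ x


def Sol (Q u u' : ℝ → ℝ) : Prop :=
  ∀ x, HasDerivAt u (u' x) x ∧ HasDerivAt u' (Q x * u x) x

def LB (Q : ℝ → ℝ) : Prop := ∀ R : ℝ, ∃ K : ℝ, 0 ≤ K ∧ ∀ x, |x| ≤ R → |Q x| ≤ K

lemma LB.neg_comp {Q : ℝ → ℝ} (h : LB Q) : LB (fun x => Q (-x)) := by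
  intro R
  obtain ⟨K, hK, h⟩ := h R
  exact ⟨K, hK, fun x hx => h (-x) (by simpa using hx)⟩

lemma LB.of_continuous {Q : ℝ → ℝ} (h : Continuous Q) : LB Q := by
  intro R
  obtain ⟨K, hK⟩ := (isCompact_Icc (a := -R) (b := R)).exists_bound_of_continuousOn h.continuousOn
  refine ⟨max K 0, le_max_right _ _, fun x hx => ?_⟩
  exact (hK x (abs_le.mp hx)).trans (le_max_left _ _)

lemma Sol.cont {Q u u' : ℝ → ℝ} (h : Sol Q u u') : Continuous u :=
  continuous_iff_continuousAt.2 fun x => (h x).1.continuousAt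

lemma Sol.cont' {Q u u' : ℝ → ℝ} (h : Sol Q u u') : Continuous u' :=
  continuous_iff_continuousAt.2 fun x => (h x).2.continuousAt

lemma Sol.neg {Q u u' : ℝ → ℝ} (h : Sol Q u u') : Sol Q (fun x => - u x) (fun x => - u' x) := by
  intro x
  refine ⟨(h x).1.neg, ?_⟩
  exact (h x).2.neg.congr_deriv (by ring)

lemma Sol.lin {Q u u' v v' : ℝ → ℝ} (h : Sol Q u u') (g : Sol Q v v') (a b : ℝ) :
    Sol Q (fun x => a * u x + b * v x) (fun x => a * u' x + b * v' x) := by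
  intro x
  refine ⟨((h x).1.const_mul a).add ((g x).1.const_mul b), ?_⟩
  exact (((h x).2.const_mul a).add ((g x).2.const_mul b)).congr_deriv (by ring)

lemma Sol.refl {Q u u' : ℝ → ℝ} (h : Sol Q u u') :
    Sol (fun x => Q (-x)) (fun x => u (-x)) (fun x => - u' (-x)) := by
  intro x
  have h1 := (h (-x)).1.scomp x (hasDerivAt_neg x)
  have h2 := ((h (-x)).2.scomp x (hasDerivAt_neg x)).neg
  constructor
  · exact h1.congr_deriv (by simp)
  · exact h2.congr_deriv (by simp)

lemma gron {d d' g : ℝ → ℝ} {a b K f : ℝ} (hK : 0 ≤ K)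
    (h1 : ∀ x, HasDerivAt d (d' x) x) (h2 : ∀ x, HasDerivAt d' (g x) x)
    (hg : ∀ x, a ≤ x → x ≤ b → |g x| ≤ K * |d x| + f) (x : ℝ) (hax : a ≤ x) (hxb : x ≤ b) :
    d x ^ 2 + d' x ^ 2 + f ^ 2 ≤ (d a ^ 2 + d' a ^ 2 + f ^ 2) * Real.exp ((K + 2) * (x - a)) := by
  set F : ℝ → ℝ := fun x => (d x ^ 2 + d' x ^ 2 + f ^ 2) * Real.exp (-((K + 2) * (x - a))) with hF
  have hd : ∀ x, HasDerivAt F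
      ((2 * d x * d' x + 2 * d' x * g x) * Real.exp (-((K + 2) * (x - a)))
       + (d x ^ 2 + d' x ^ 2 + f ^ 2) * (Real.exp (-((K + 2) * (x - a))) * (-(K + 2)))) x := by
    intro x
    have e1 : HasDerivAt (fun x => d x ^ 2 + d' x ^ 2 + f ^ 2) (2 * d x * d' x + 2 * d' x * g x) x := by
      have := (((h1 x).pow 2).add ((h2 x).pow 2)).add_const (f ^ 2)
      exact this.congr_deriv (by simp)
    have e2 : HasDerivAt (fun x => -((K + 2) * (x - a))) (-(K + 2)) x := by
      have := (((hasDerivAt_id x).sub_const a).const_mul (K + 2)).neg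
      exact this.congr_deriv (by simp)
    exact e1.mul e2.exp
  have hanti : AntitoneOn F (Set.Icc a b) := by
    apply antitoneOn_of_deriv_nonpos (convex_Icc a b)
    · exact fun x _ => (hd x).continuousAt.continuousWithinAt
    · exact fun x _ => (hd x).differentiableAt.differentiableWithinAt
    · intro x hx
      rw [interior_Icc] at hx
      rw [(hd x).deriv]
      have hgx := hg x hx.1.le hx.2.le
      have hE := Real.exp_pos (-((K + 2) * (x - a)))
      have key : 2 * d x * d' x + 2 * d' x * g x ≤ (K + 2) * (d x ^ 2 + d' x ^ 2 + f ^ 2) := by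
        have a1 : 2 * d x * d' x ≤ d x ^ 2 + d' x ^ 2 := by nlinarith [sq_nonneg (d x - d' x)]
        have a2 : d' x * g x ≤ |d' x| * (K * |d x| + f) := by
          calc d' x * g x ≤ |d' x * g x| := le_abs_self _
            _ = |d' x| * |g x| := abs_mul _ _
            _ ≤ _ := by gcongr
        have a3 : |d' x| * |d x| * 2 ≤ d x ^ 2 + d' x ^ 2 := by
          nlinarith [sq_nonneg (|d x| - |d' x|), sq_abs (d x), sq_abs (d' x)]
        have a4 : |d' x| * f * 2 ≤ f ^ 2 + d' x ^ 2 := by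
          nlinarith [sq_nonneg (f - |d' x|), sq_abs (d' x)]
        nlinarith [mul_le_mul_of_nonneg_left a3 hK, mul_nonneg hK (sq_nonneg f), sq_nonneg (d x), sq_nonneg f]
      nlinarith
  have := hanti (Set.left_mem_Icc.2 (hax.trans hxb)) ⟨hax, hxb⟩ hax
  simp only [hF, sub_self, mul_zero, neg_zero, Real.exp_zero, mul_one] at this
  calc _ = (d x ^ 2 + d' x ^ 2 + f ^ 2) * Real.exp (-((K + 2) * (x - a))) * Real.exp ((K + 2) * (x - a)) := by
        rw [mul_assoc, ← Real.exp_add]; simp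
    _ ≤ _ := by gcongr

lemma Sol.zero_right {Q u u' : ℝ → ℝ} (hQ : LB Q) (h : Sol Q u u') {a : ℝ} (h0 : u a = 0)
    (h0' : u' a = 0) {x : ℝ} (hx : a ≤ x) : u x = 0 := by
  obtain ⟨K, hK, hb⟩ := hQ (max |a| |x|)
  have := gron (d := u) (d' := u') (a := a) (b := x) (f := 0) hK (fun x => (h x).1) (fun x => (h x).2)
    (fun y hy1 hy2 => by
      rw [abs_mul, add_zero]
      gcongr
      apply hb
      exact abs_le_max_abs_abs hy1 hy2) x hx le_rfl
  simp only [h0, h0'] at this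
  norm_num at this
  nlinarith [sq_nonneg (u x), sq_nonneg (u' x)]

lemma Sol.unique_zero {Q u u' : ℝ → ℝ} (hQ : LB Q) (h : Sol Q u u') {a : ℝ} (h0 : u a = 0)
    (h0' : u' a = 0) : u = 0 := by
  funext x
  rcases le_total a x with hx | hx
  · exact h.zero_right hQ h0 h0' hx
  · have := h.refl.zero_right hQ.neg_comp (a := -a) (by simpa using h0) (by simpa using h0')
      (x := -x) (by linarith)
    simpa using this

lemma Sol.deriv_ne {Q u u' : ℝ → ℝ} (hQ : LB Q) (h : Sol Q u u') (hu : u ≠ 0) {a : ℝ} (h0 : u a = 0) :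
    u' a ≠ 0 := fun h' => hu (h.unique_zero hQ h0 h')

lemma conv_right {W u u' : ℝ → ℝ} (hW : LB W) {e : ℝ} {es : ℕ → ℝ} {us us' : ℕ → ℝ → ℝ}
    (hu : Sol (fun x => W x - e) u u') (hus : ∀ m, Sol (fun x => W x - es m) (us m) (us' m))
    (he : Tendsto es atTop (nhds e)) (h0 : Tendsto (fun m => us m 0) atTop (nhds (u 0)))
    (h0' : Tendsto (fun m => us' m 0) atTop (nhds (u' 0))) (R : ℝ) :
    ∃ δ : ℕ → ℝ, Tendsto δ atTop (nhds 0) ∧ ∀ m x, 0 ≤ x → x ≤ R →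
      (us m x - u x) ^ 2 + (us' m x - u' x) ^ 2 ≤ δ m := by
  obtain ⟨K, hK, hb⟩ := hW R
  obtain ⟨U, hU0, hU⟩ := LB.of_continuous hu.cont R
  obtain ⟨D, hD⟩ := he.bddAbove_range
  obtain ⟨D', hD'⟩ := he.bddBelow_range
  set K' := K + (|D| + |D'|)
  have hK' : 0 ≤ K' := by positivity
  refine ⟨fun m => ((us m 0 - u 0) ^ 2 + (us' m 0 - u' 0) ^ 2 + (|e - es m| * U) ^ 2) *
    Real.exp ((K' + 2) * R), ?_, ?_⟩
  · have t1 : Tendsto (fun m => (us m 0 - u 0) ^ 2) atTop (nhds ((u 0 - u 0) ^ 2)) :=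
      (h0.sub_const _).pow 2
    have t2 : Tendsto (fun m => (us' m 0 - u' 0) ^ 2) atTop (nhds ((u' 0 - u' 0) ^ 2)) :=
      (h0'.sub_const _).pow 2
    have t3 : Tendsto (fun m => (|e - es m| * U) ^ 2) atTop (nhds ((|e - e| * U) ^ 2)) :=
      ((he.const_sub _).abs.mul_const _).pow 2
    have := ((t1.add t2).add t3).mul_const (Real.exp ((K' + 2) * R))
    convert this using 2
    simp
  · intro m x hx hxR
    have hd : |es m| ≤ |D| + |D'| := by
      have a1 := hD ⟨m, rfl⟩
      have a2 := hD' ⟨m, rfl⟩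
      rw [abs_le]
      constructor
      · linarith [neg_abs_le D', abs_nonneg D]
      · linarith [le_abs_self D, abs_nonneg D']
    have := gron (d := fun x => us m x - u x) (d' := fun x => us' m x - u' x) (a := 0) (b := x)
      (g := fun x => (W x - es m) * us m x - (W x - e) * u x)
      (f := |e - es m| * U) hK' (fun x => ((hus m) x).1.sub (hu x).1) 
      (fun x => ((hus m) x).2.sub (hu x).2)
      (fun y hy1 hy2 => by
        have hyR : |y| ≤ R := by rw [abs_of_nonneg hy1]; linarith
        have : (W y - es m) * us m y - (W y - e) * u y =
          (W y - es m) * (us m y - u y) + (e - es m) * u y := by ring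
        rw [this]
        refine (abs_add_le _ _).trans ?_
        rw [abs_mul, abs_mul]
        have b1 := hb y hyR
        have b2 := hU y hyR
        have b3 : |W y - es m| ≤ K' := (abs_sub _ _).trans (by simp only [K']; linarith)
        gcongr) x hx le_rfl
    simp only [sub_zero] at this
    have h4 : Real.exp ((K' + 2) * x) ≤ Real.exp ((K' + 2) * R) := by gcongr
    have h5 : 0 ≤ (us m 0 - u 0) ^ 2 + (us' m 0 - u' 0) ^ 2 + (|e - es m| * U) ^ 2 := by positivity
    nlinarith [mul_le_mul_of_nonneg_left h4 h5, sq_nonneg (|e - es m| * U)]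

lemma conv_unif {W u u' : ℝ → ℝ} (hW : LB W) {e : ℝ} {es : ℕ → ℝ} {us us' : ℕ → ℝ → ℝ}
    (hu : Sol (fun x => W x - e) u u') (hus : ∀ m, Sol (fun x => W x - es m) (us m) (us' m))
    (he : Tendsto es atTop (nhds e)) (h0 : Tendsto (fun m => us m 0) atTop (nhds (u 0)))
    (h0' : Tendsto (fun m => us' m 0) atTop (nhds (u' 0))) (R : ℝ) :
    ∃ δ : ℕ → ℝ, Tendsto δ atTop (nhds 0) ∧ ∀ m x, |x| ≤ R →
      (us m x - u x) ^ 2 + (us' m x - u' x) ^ 2 ≤ δ m := by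
  obtain ⟨δ, hδ, h1⟩ := conv_right hW hu hus he h0 h0' R
  obtain ⟨δ', hδ', h2⟩ := conv_right hW.neg_comp hu.refl (fun m => (hus m).refl) he (by simpa using h0)
    (by simpa using h0'.neg) R
  refine ⟨fun m => max (δ m) (δ' m), by simpa using hδ.max hδ', fun m x hx => ?_⟩
  rcases le_total 0 x with h | h
  · exact (h1 m x h (by rwa [abs_of_nonneg h] at hx)).trans (le_max_left _ _)
  · refine le_trans ?_ (le_max_right _ _)
    have := h2 m (-x) (by linarith) (by rwa [abs_of_nonpos h] at hx)
    simp only [neg_neg] at this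
    linarith [sq_nonneg (us' m x - u' x), show (-us' m x - -u' x) ^ 2 = (us' m x - u' x) ^ 2 by ring]

lemma conv_joint {W u u' : ℝ → ℝ} (hW : LB W) {e : ℝ} {es : ℕ → ℝ} {us us' : ℕ → ℝ → ℝ}
    (hu : Sol (fun x => W x - e) u u') (hus : ∀ m, Sol (fun x => W x - es m) (us m) (us' m))
    (he : Tendsto es atTop (nhds e)) (h0 : Tendsto (fun m => us m 0) atTop (nhds (u 0)))
    (h0' : Tendsto (fun m => us' m 0) atTop (nhds (u' 0))) {xs : ℕ → ℝ} {x : ℝ}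
    (hx : Tendsto xs atTop (nhds x)) :
    Tendsto (fun m => us m (xs m)) atTop (nhds (u x)) ∧
    Tendsto (fun m => us' m (xs m)) atTop (nhds (u' x)) := by
  obtain ⟨R, hR⟩ := hx.abs.bddAbove_range
  obtain ⟨δ, hδ, h⟩ := conv_unif hW hu hus he h0 h0' R
  have hs : Tendsto (fun m => √(δ m)) atTop (nhds 0) := by
    have := (Real.continuous_sqrt.tendsto 0).comp hδ
    rw [Real.sqrt_zero] at this
    exact this
  have hm : ∀ m, |xs m| ≤ R := fun m => hR ⟨m, rfl⟩
  have e1 : Tendsto (fun m => us m (xs m) - u (xs m)) atTop (nhds 0) := by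
    refine squeeze_zero_norm (fun m => ?_) hs
    exact Real.abs_le_sqrt (by nlinarith [h m _ (hm m), sq_nonneg (us' m (xs m) - u' (xs m))])
  have e2 : Tendsto (fun m => us' m (xs m) - u' (xs m)) atTop (nhds 0) := by
    refine squeeze_zero_norm (fun m => ?_) hs
    exact Real.abs_le_sqrt (by nlinarith [h m _ (hm m), sq_nonneg (us m (xs m) - u (xs m))])
  have c1 := e1.add ((hu.cont.tendsto x).comp hx)
  have c2 := e2.add ((hu.cont'.tendsto x).comp hx)
  constructor
  · simpa using c1
  · simpa using c2


noncomputable def prf (Q : ℝ → ℝ) (t θ : ℝ) : ℝ := 1 - (1 + Q t) * Real.sin θ ^ 2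

lemma prf_lip {Q : ℝ → ℝ} {t : ℝ} {K : NNReal} (hK : |1 + Q t| ≤ K) :
    LipschitzWith (2 * K) (prf Q t) := by
  have hd : ∀ θ, HasDerivAt (prf Q t) (-((1 + Q t) * (2 * Real.sin θ * Real.cos θ))) θ := by
    intro θ
    have := (((Real.hasDerivAt_sin θ).pow 2).const_mul (1 + Q t)).const_sub 1
    exact this.congr_deriv (by simp)
  apply lipschitzWith_of_nnnorm_deriv_le (fun θ => (hd θ).differentiableAt)
  intro θ
  rw [(hd θ).deriv, ← NNReal.coe_le_coe]
  push_cast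
  rw [norm_neg, norm_mul]
  have : ‖2 * Real.sin θ * Real.cos θ‖ ≤ 2 := by
    rw [Real.norm_eq_abs, abs_mul, abs_mul, abs_two]
    nlinarith [Real.abs_sin_le_one θ, Real.abs_cos_le_one θ, abs_nonneg (Real.sin θ), abs_nonneg (Real.cos θ)]
  calc _ ≤ (K : ℝ) * 2 := by
        gcongr
        exact hK
    _ = _ := by ring

lemma prf_bd {Q : ℝ → ℝ} {t : ℝ} {K : ℝ} (hK : |1 + Q t| ≤ K) (θ : ℝ) : |prf Q t θ| ≤ 1 + K := by
  unfold prf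
  refine (abs_sub _ _).trans ?_
  rw [abs_one, abs_mul, abs_of_nonneg (sq_nonneg (Real.sin θ))]
  have := Real.sin_sq_le_one θ
  have := abs_nonneg (1 + Q t)
  nlinarith

lemma theta_loc {Q : ℝ → ℝ} (hQ : Continuous Q) (t₀ θ₀ : ℝ) (N : ℕ) :
    ∃ θ : ℝ → ℝ, θ t₀ = θ₀ ∧ ∀ x ∈ Set.Ioo (t₀ - (N + 1)) (t₀ + (N + 1)),
      HasDerivAt θ (prf Q x (θ x)) x := by
  obtain ⟨K, hK⟩ := (isCompact_Icc (a := t₀ - (N + 1)) (b := t₀ + (N + 1))).exists_bound_of_continuousOn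
    (f := fun x => 1 + Q x) (by fun_prop)
  have hN : (0 : ℝ) < N + 1 := by positivity
  have hK0 : 0 ≤ K := (norm_nonneg _).trans (hK t₀ ⟨by linarith, by linarith⟩)
  lift K to NNReal using hK0
  have hPL : IsPicardLindelof (prf Q) (tmin := t₀ - (N + 1)) (tmax := t₀ + (N + 1))
      ⟨t₀, by constructor <;> linarith⟩ θ₀ ((1 + K) * (N + 1)) 0 (1 + K) (2 * K) := by
    refine ⟨fun t ht => (prf_lip (hK t ht)).lipschitzOnWith, fun x _ => ?_, fun t ht x _ => ?_, ?_⟩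
    · unfold prf; fun_prop
    · exact (prf_bd (hK t ht) x)
    · simp
  obtain ⟨θ, h0, h⟩ := hPL.exists_eq_forall_mem_Icc_hasDerivWithinAt₀
  refine ⟨θ, h0, fun x hx => ?_⟩
  exact (h x (Set.Ioo_subset_Icc_self hx)).hasDerivAt (Icc_mem_nhds hx.1 hx.2)

lemma theta_glob {Q : ℝ → ℝ} (hQ : Continuous Q) (t₀ θ₀ : ℝ) :
    ∃ θ : ℝ → ℝ, θ t₀ = θ₀ ∧ ∀ x, HasDerivAt θ (prf Q x (θ x)) x := by
  choose T hT0 hT using theta_loc hQ t₀ θ₀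
  have hag : ∀ N M : ℕ, N ≤ M → ∀ x ∈ Set.Ioo (t₀ - (N + 1)) (t₀ + (N + 1)), T N x = T M x := by
    intro N M hNM
    have hNM' : (N : ℝ) ≤ M := by exact_mod_cast hNM
    obtain ⟨K, hK⟩ := (isCompact_Icc (a := t₀ - (N + 1)) (b := t₀ + (N + 1))).exists_bound_of_continuousOn
      (f := fun x => 1 + Q x) (by fun_prop)
    have hN : (0 : ℝ) < N + 1 := by positivity
    have hK0 : 0 ≤ K := (norm_nonneg _).trans (hK t₀ ⟨by linarith, by linarith⟩)
    lift K to NNReal using hK0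
    refine ODE_solution_unique_of_mem_Ioo (v := prf Q) (s := fun _ => Set.univ) (K := 2 * K) (t₀ := t₀)
      (fun t ht => (prf_lip (hK t (Set.Ioo_subset_Icc_self ht))).lipschitzOnWith)
      ⟨by linarith, by linarith⟩ (fun t ht => ⟨hT N t ht, trivial⟩)
      (fun t ht => ⟨hT M t ⟨by linarith [ht.1], by linarith [ht.2]⟩, trivial⟩) (by rw [hT0, hT0])
  set n : ℝ → ℕ := fun x => ⌈|x - t₀|⌉₊ with hn
  have hmem : ∀ x, ∀ N : ℕ, n x ≤ N → x ∈ Set.Ioo (t₀ - (N + 1)) (t₀ + (N + 1)) := by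
    intro x N h
    have h1 : |x - t₀| ≤ N := (Nat.le_ceil _).trans (by exact_mod_cast h)
    rw [abs_le] at h1
    constructor <;> linarith
  have hval : ∀ x, ∀ N : ℕ, x ∈ Set.Ioo (t₀ - (N + 1)) (t₀ + (N + 1)) → T (n x) x = T N x := by
    intro x N h
    rcases le_total (n x) N with h' | h'
    · exact hag _ _ h' x (hmem x _ le_rfl)
    · exact (hag _ _ h' x h).symm
  refine ⟨fun x => T (n x) x, hT0 _, fun x => ?_⟩
  have h1 := hT (n x) x (hmem x _ le_rfl)
  refine h1.congr_of_eventuallyEq ?_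
  filter_upwards [isOpen_Ioo.mem_nhds (hmem x _ le_rfl)] with y hy
  exact hval y _ hy

lemma exists_pruefer {Q : ℝ → ℝ} (hQ : Continuous Q) (t₀ θ₀ : ℝ) :
    ∃ u u' : ℝ → ℝ, Sol Q u u' ∧ u t₀ = Real.sin θ₀ ∧ u' t₀ = Real.cos θ₀ := by
  obtain ⟨θ, h0, h⟩ := theta_glob hQ t₀ θ₀
  have hθ : Continuous θ := continuous_iff_continuousAt.2 fun x => (h x).continuousAt
  set g : ℝ → ℝ := fun x => (1 + Q x) * Real.sin (θ x) * Real.cos (θ x) with hg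
  have hgc : Continuous g := by fun_prop
  set r : ℝ → ℝ := fun x => Real.exp (∫ t in t₀..x, g t) with hr
  have hrd : ∀ x, HasDerivAt r (r x * g x) x := fun x =>
    (intervalIntegral.integral_hasDerivAt_right (hgc.intervalIntegrable _ _)
      (hgc.stronglyMeasurableAtFilter _ _) hgc.continuousAt).exp
  refine ⟨fun x => r x * Real.sin (θ x), fun x => r x * Real.cos (θ x), fun x => ⟨?_, ?_⟩, ?_, ?_⟩
  · refine ((hrd x).mul (h x).sin).congr_deriv ?_
    simp only [hg, prf]
    linear_combination (-r x * Real.cos (θ x) * (1 + Q x) + r x * Real.cos (θ x) * (1 + Q x)) * Real.sin_sq_add_cos_sq (θ x)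
  · refine ((hrd x).mul (h x).cos).congr_deriv ?_
    simp only [hg, prf]
    linear_combination (r x * Real.sin (θ x) * (1 + Q x)) * Real.sin_sq_add_cos_sq (θ x)
  · simp [hr, h0]
  · simp [hr, h0]

lemma exists_sol {Q : ℝ → ℝ} (hQ : Continuous Q) (t₀ a b : ℝ) :
    ∃ u u' : ℝ → ℝ, Sol Q u u' ∧ u t₀ = a ∧ u' t₀ = b := by
  obtain ⟨u, u', h, h1, h2⟩ := exists_pruefer hQ t₀ (Real.pi / 2)
  obtain ⟨v, v', g, g1, g2⟩ := exists_pruefer hQ t₀ 0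
  refine ⟨_, _, h.lin g a b, ?_, ?_⟩ <;> simp [h1, h2, g1, g2]


lemma Sol.p_deriv {Q u u' : ℝ → ℝ} (h : Sol Q u u') (x : ℝ) :
    HasDerivAt (fun x => u x * u' x) (u' x ^ 2 + Q x * u x ^ 2) x :=
  ((h x).1.mul (h x).2).congr_deriv (by ring)

lemma Sol.sq_deriv {Q u u' : ℝ → ℝ} (h : Sol Q u u') (x : ℝ) :
    HasDerivAt (fun x => u x ^ 2) (2 * (u x * u' x)) x :=
  ((h x).1.pow 2).congr_deriv (by simp; ring)

lemma Sol.p_mono {Q u u' : ℝ → ℝ} (h : Sol Q u u') {R : ℝ} (hQ : ∀ x, R ≤ x → 0 ≤ Q x) :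
    MonotoneOn (fun x => u x * u' x) (Set.Ici R) := by
  apply monotoneOn_of_deriv_nonneg (convex_Ici R)
  · exact fun x _ => (h.p_deriv x).continuousAt.continuousWithinAt
  · exact fun x _ => (h.p_deriv x).differentiableAt.differentiableWithinAt
  · intro x hx
    rw [interior_Ici] at hx
    rw [(h.p_deriv x).deriv]
    have := hQ x (le_of_lt hx)
    positivity

lemma Sol.sq_mono {Q u u' : ℝ → ℝ} (h : Sol Q u u') {R x₁ : ℝ} (hQ : ∀ x, R ≤ x → 0 ≤ Q x)
    (h1 : R ≤ x₁) (hp : 0 ≤ u x₁ * u' x₁) : MonotoneOn (fun x => u x ^ 2) (Set.Ici x₁) := by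
  apply monotoneOn_of_deriv_nonneg (convex_Ici x₁)
  · exact fun x _ => (h.sq_deriv x).continuousAt.continuousWithinAt
  · exact fun x _ => (h.sq_deriv x).differentiableAt.differentiableWithinAt
  · intro x hx
    rw [interior_Ici] at hx
    rw [(h.sq_deriv x).deriv]
    have := h.p_mono hQ h1 (h1.trans (le_of_lt hx)) (le_of_lt hx)
    simp only at this
    linarith

lemma Sol.no_zero {Q u u' : ℝ → ℝ} (h : Sol Q u u') {R x₁ : ℝ} (hQ : ∀ x, R ≤ x → 0 ≤ Q x)
    (h1 : R ≤ x₁) (hp : 0 < u x₁ * u' x₁) {x : ℝ} (hx : x₁ ≤ x) : u x ≠ 0 := by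
  intro h0
  have := h.p_mono hQ h1 (h1.trans hx) hx
  simp only [h0, zero_mul] at this
  linarith

lemma Sol.one_zero {Q u u' : ℝ → ℝ} (hL : LB Q) (h : Sol Q u u') (hu : u ≠ 0) {R a b : ℝ}
    (hQ : ∀ x, R ≤ x → 0 ≤ Q x) (h1 : R ≤ a) (hab : a < b) (ha : u a = 0) (hb : u b = 0) : False := by
  have hz : ∀ x ∈ Set.Ioo a b, u x = 0 := by
    intro x hx
    have h2 := h.sq_mono hQ h1 (by simp [ha]) (Set.mem_Ici.2 hx.1.le) (Set.mem_Ici.2 hab.le) hx.2.le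
    simp only [hb] at h2
    nlinarith [sq_nonneg (u x)]
  set m := (a + b) / 2
  have hm : m ∈ Set.Ioo a b := ⟨by simp only [m]; linarith, by simp only [m]; linarith⟩
  have hd : HasDerivAt u 0 m := by
    refine (hasDerivAt_const m (0 : ℝ)).congr_of_eventuallyEq ?_
    filter_upwards [isOpen_Ioo.mem_nhds hm] with y hy using hz y hy
  exact hu (h.unique_zero hL (hz m hm) ((h m).1.unique hd))

lemma Sol.anti_bdd {Q u u' : ℝ → ℝ} (h : Sol Q u u') {R : ℝ} (hp : ∀ x, R ≤ x → u x * u' x ≤ 0)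
    {x : ℝ} (hx : R ≤ x) : |u x| ≤ |u R| := by
  have : AntitoneOn (fun x => u x ^ 2) (Set.Ici R) := by
    apply antitoneOn_of_deriv_nonpos (convex_Ici R)
    · exact fun x _ => (h.sq_deriv x).continuousAt.continuousWithinAt
    · exact fun x _ => (h.sq_deriv x).differentiableAt.differentiableWithinAt
    · intro x hx
      rw [interior_Ici] at hx
      rw [(h.sq_deriv x).deriv]
      linarith [hp x (le_of_lt hx)]
  exact sq_le_sq.1 (this Set.self_mem_Ici hx hx)

lemma Sol.p_nonpos {Q u u' : ℝ → ℝ} (h : Sol Q u u') {R : ℝ} (hQ : ∀ x, R ≤ x → 0 ≤ Q x)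
    (hI : Integrable (fun x => u x ^ 2)) {x : ℝ} (hx : R ≤ x) : u x * u' x ≤ 0 := by
  by_contra! hp
  have hm := h.sq_mono hQ hx hp.le
  have hpos : 0 < u x ^ 2 := by
    have : u x ≠ 0 := fun h0 => by simp [h0] at hp
    positivity
  have h2 : IntegrableOn (fun _ : ℝ => u x ^ 2) (Set.Ioi x) := by
    refine Integrable.mono' (hI.integrableOn (s := Set.Ioi x)) aestronglyMeasurable_const ?_
    refine (ae_restrict_iff' measurableSet_Ioi).2 (ae_of_all _ fun y hy => ?_)
    rw [Real.norm_eq_abs, abs_of_pos hpos]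
    exact hm Set.self_mem_Ici (Set.mem_Ici.2 (le_of_lt hy)) (le_of_lt hy)
  rw [integrableOn_const_iff] at h2
  simp [hpos.ne'] at h2
  exact hpos.ne' (by simp [h2])

lemma Sol.L2_right {Q u u' : ℝ → ℝ} (h : Sol Q u u') {R : ℝ} (hQ : ∀ x, R ≤ x → 1 ≤ Q x)
    (hp : ∀ x, R ≤ x → u x * u' x ≤ 0) : IntegrableOn (fun x => u x ^ 2) (Set.Ioi R) := by
  have hc : Continuous (fun x => u x ^ 2) := h.cont.pow 2
  refine integrableOn_Ioi_of_intervalIntegral_norm_bounded (l := atTop) (b := id) (-(u R * u' R)) R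
    (fun i => (hc.integrableOn_Ioc)) tendsto_id ?_
  filter_upwards [eventually_ge_atTop R] with x hx
  have hd : ∀ y, HasDerivAt (fun y => u y * u' y - ∫ t in R..y, u t ^ 2)
      (u' y ^ 2 + Q y * u y ^ 2 - u y ^ 2) y := fun y =>
    (h.p_deriv y).sub (intervalIntegral.integral_hasDerivAt_right (hc.intervalIntegrable _ _)
      (hc.stronglyMeasurableAtFilter _ _) hc.continuousAt)
  have hm : MonotoneOn (fun y => u y * u' y - ∫ t in R..y, u t ^ 2) (Set.Ici R) := by
    apply monotoneOn_of_deriv_nonneg (convex_Ici R)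
    · exact fun x _ => (hd x).continuousAt.continuousWithinAt
    · exact fun x _ => (hd x).differentiableAt.differentiableWithinAt
    · intro x hx
      rw [interior_Ici] at hx
      rw [(hd x).deriv]
      nlinarith [hQ x (le_of_lt hx), sq_nonneg (u x), sq_nonneg (u' x)]
  have := hm Set.self_mem_Ici hx hx
  simp only [intervalIntegral.integral_same, sub_zero] at this
  have e : ∀ t, ‖u t ^ 2‖ = u t ^ 2 := fun t => by rw [Real.norm_eq_abs, abs_of_nonneg (sq_nonneg _)]
  simp only [e, id]
  linarith [hp x hx]

def Bd (u : ℝ → ℝ) : Prop := ∃ M : ℝ, ∀ x, |u x| ≤ M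

lemma Bd.of_ends {u : ℝ → ℝ} (hc : Continuous u) {R M₁ M₂ : ℝ} (h1 : ∀ x, R ≤ x → |u x| ≤ M₁)
    (h2 : ∀ x, x ≤ -R → |u x| ≤ M₂) : Bd u := by
  obtain ⟨K, hK, hb⟩ := LB.of_continuous hc R
  refine ⟨max K (max M₁ M₂), fun x => ?_⟩
  rcases le_total R x with h | h
  · exact (h1 x h).trans ((le_max_left _ _).trans (le_max_right _ _))
  rcases le_total x (-R) with h' | h'
  · exact (h2 x h').trans ((le_max_right _ _).trans (le_max_right _ _))
  · exact (hb x (abs_le.2 ⟨h', h⟩)).trans (le_max_left _ _)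

lemma Sol.bd_of_L2 {Q u u' : ℝ → ℝ} (h : Sol Q u u') {R : ℝ} (hQ : ∀ x, R ≤ |x| → 0 ≤ Q x)
    (hI : Integrable (fun x => u x ^ 2)) : Bd u := by
  have h1 : ∀ x, |R| ≤ x → |u x| ≤ |u (|R|)| := fun x hx =>
    h.anti_bdd (fun y hy => h.p_nonpos (R := |R|) (fun z hz => hQ z ((le_abs_self R).trans (hz.trans (le_abs_self z)))) hI hy) hx
  have h2 : ∀ x, |R| ≤ x → |u (-x)| ≤ |u (-|R|)| := fun x hx =>
    h.refl.anti_bdd (fun y hy => h.refl.p_nonpos (R := |R|) (fun z hz => hQ (-z) (by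
      rw [abs_neg]
      exact ((le_abs_self R).trans (hz.trans (le_abs_self z))))) hI.comp_neg hy) hx
  exact Bd.of_ends h.cont h1 (fun x hx => by simpa using h2 (-x) (by linarith))

lemma sign_const {f : ℝ → ℝ} (hf : Continuous f) {c x : ℝ} (hcx : c ≤ x) (h0 : 0 < f c)
    (hne : ∀ y ∈ Set.Icc c x, f y ≠ 0) : 0 < f x := by
  by_contra! h
  obtain ⟨y, hy, hy0⟩ := intermediate_value_Icc' hcx hf.continuousOn (⟨h, h0.le⟩ : (0 : ℝ) ∈ Set.Icc (f x) (f c))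
  exact hne y hy hy0

lemma wr_deriv {Q q φ φ' ψ ψ' : ℝ → ℝ} (hφ : Sol Q φ φ') (hψ : Sol q ψ ψ') (x : ℝ) :
    HasDerivAt (fun x => φ x * ψ' x - φ' x * ψ x) ((q x - Q x) * (φ x * ψ x)) x :=
  (((hφ x).1.mul (hψ x).2).sub ((hφ x).2.mul (hψ x).1)).congr_deriv (by ring)

lemma comp_right {Q q φ φ' ψ ψ' : ℝ → ℝ} (hφ : Sol Q φ φ') (hψ : Sol q ψ ψ') (hb : Bd φ) {c : ℝ}
    (h1 : 0 < φ c) (h2 : 0 < ψ c)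
    (h : ∀ x, c ≤ x → (∀ y ∈ Set.Icc c x, φ y ≠ 0) → ψ x ≠ 0 ∧ q x < Q x)
    (hw : φ c * ψ' c - φ' c * ψ c ≤ 0) : False := by
  have hpos : ∀ x, c ≤ x → (∀ y ∈ Set.Icc c x, φ y ≠ 0) → 0 < φ x ∧ 0 < ψ x ∧ q x < Q x := by
    intro x hx hy
    refine ⟨sign_const hφ.cont hx h1 hy, sign_const hψ.cont hx h2 fun y hy' => ?_, (h x hx hy).2⟩
    exact (h y hy'.1 (fun z hz => hy z ⟨hz.1, hz.2.trans hy'.2⟩)).1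
  set w := fun x => φ x * ψ' x - φ' x * ψ x with hwdef
  have hanti : ∀ b, c ≤ b → (∀ y, c ≤ y → y < b → φ y ≠ 0) → StrictAntiOn w (Set.Icc c b) := by
    intro b hcb hne
    apply strictAntiOn_of_deriv_neg (convex_Icc c b)
    · exact fun x _ => (wr_deriv hφ hψ x).continuousAt.continuousWithinAt
    · intro x hx
      rw [interior_Icc] at hx
      rw [(wr_deriv hφ hψ x).deriv]
      obtain ⟨p1, p2, p3⟩ := hpos x hx.1.le (fun y hy => hne y hy.1 (hy.2.trans_lt hx.2))
      exact mul_neg_of_neg_of_pos (by linarith) (mul_pos p1 p2)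
  by_cases hall : ∀ x, c ≤ x → φ x ≠ 0
  · obtain ⟨M, hM⟩ := hb
    have hp : ∀ x, c ≤ x → 0 < φ x ∧ 0 < ψ x ∧ q x < Q x := fun x hx =>
      hpos x hx (fun y hy => hall y hy.1)
    have hM0 : 0 < M := h1.trans_le ((le_abs_self _).trans (hM c))
    have hwn : w (c + 1) < 0 := by
      have := hanti (c + 1) (by linarith) (fun y hy _ => hall y hy) (Set.left_mem_Icc.2 (by linarith))
        (Set.right_mem_Icc.2 (by linarith)) (by linarith)
      exact this.trans_le hw
    set η := -w (c + 1) with hη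
    have hη0 : 0 < η := by linarith
    have hd : ∀ x, c + 1 ≤ x → HasDerivAt (fun x => ψ x / φ x + η / M ^ 2 * x) (w x / φ x ^ 2 + η / M ^ 2) x := by
      intro x hx
      have hx0 := (hp x (by linarith)).1
      have := ((hψ x).1.div (hφ x).1 hx0.ne').add ((hasDerivAt_id x).const_mul (η / M ^ 2))
      refine this.congr_deriv ?_
      simp only [hwdef]
      ring
    have hm : AntitoneOn (fun x => ψ x / φ x + η / M ^ 2 * x) (Set.Ici (c + 1)) := by
      apply antitoneOn_of_deriv_nonpos (convex_Ici _)
      · exact fun x hx => (hd x hx).continuousAt.continuousWithinAt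
      · intro x hx
        rw [interior_Ici] at hx
        exact (hd x (le_of_lt hx)).differentiableAt.differentiableWithinAt
      · intro x hx
        rw [interior_Ici] at hx
        have hx : c + 1 < x := hx
        rw [(hd x (le_of_lt hx)).deriv]
        have hx0 := (hp x (by linarith)).1
        have hwx : w x ≤ -η := by
          have := hanti x (by linarith) (fun y hy _ => hall y hy) (Set.mem_Icc.2 ⟨by linarith, hx.le⟩)
            (Set.right_mem_Icc.2 (by linarith)) hx
          simp only [hη, neg_neg]
          exact this.le
        have hφM : φ x ^ 2 ≤ M ^ 2 := by
          have := (le_abs_self _).trans (hM x)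
          gcongr
        have e1 : w x / φ x ^ 2 ≤ (-η) / φ x ^ 2 := by gcongr
        have e2 : η / M ^ 2 ≤ η / φ x ^ 2 := by gcongr
        have e3 : -η / φ x ^ 2 = - (η / φ x ^ 2) := by ring
        linarith
    set A := ψ (c + 1) / φ (c + 1) with hA
    have hA0 : 0 < A := div_pos (hp _ (by linarith)).2.1 (hp _ (by linarith)).1
    set T := c + 1 + A * M ^ 2 / η with hT
    have hT1 : c + 1 ≤ T := by
      have : 0 < A * M ^ 2 / η := by positivity
      linarith
    have := hm Set.self_mem_Ici hT1 hT1
    simp only at this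
    have hq : 0 < ψ T / φ T := div_pos (hp _ (by linarith)).2.1 (hp _ (by linarith)).1
    have e : η / M ^ 2 * T = η / M ^ 2 * (c + 1) + A := by
      rw [hT]; field_simp
    rw [e, ← hA] at this
    linarith
  · push Not at hall
    obtain ⟨x₁, hx₁, hx₁0⟩ := hall
    set S := {x | c ≤ x ∧ φ x = 0} with hS
    have hScl : IsClosed S := (isClosed_Ici (a := c)).inter (isClosed_singleton.preimage hφ.cont : IsClosed (φ ⁻¹' {0}))
    have hSb : BddBelow S := ⟨c, fun x hx => hx.1⟩
    have hbS := hScl.csInf_mem ⟨x₁, hx₁, hx₁0⟩ hSb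
    set b := sInf S
    have hne : ∀ y, c ≤ y → y < b → φ y ≠ 0 := fun y hy hyb h0 =>
      absurd (csInf_le hSb (show y ∈ S from ⟨hy, h0⟩)) (not_le.2 hyb)
    have hcb : c < b := lt_of_le_of_ne hbS.1 (fun h' => by
      have := hbS.2
      rw [← h'] at this
      exact h1.ne' this)
    have hwb := hanti b hcb.le hne (Set.left_mem_Icc.2 hcb.le) (Set.right_mem_Icc.2 hcb.le) hcb
    have hpp : ∀ y ∈ Set.Ioo c b, 0 < φ y ∧ 0 < ψ y := fun y hy =>
      ⟨(hpos y hy.1.le (fun z hz => hne z hz.1 (hz.2.trans_lt hy.2))).1,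
       (hpos y hy.1.le (fun z hz => hne z hz.1 (hz.2.trans_lt hy.2))).2.1⟩
    have hev : ∀ᶠ y in nhdsWithin b (Set.Iio b), y ∈ Set.Ioo c b := Ioo_mem_nhdsLT hcb
    have hψb : 0 ≤ ψ b := by
      refine ge_of_tendsto (hψ.cont.continuousAt.tendsto.mono_left (nhdsWithin_le_nhds (s := Set.Iio b))) ?_
      filter_upwards [hev] with y hy using (hpp y hy).2.le
    have hφb : φ' b ≤ 0 := by
      have hs := hasDerivAt_iff_tendsto_slope.1 (hφ b).1
      refine le_of_tendsto (hs.mono_left (nhdsWithin_mono b (s := Set.Iio b) fun y hy => ne_of_lt hy)) ?_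
      filter_upwards [hev] with y hy
      rw [slope_def_field, hbS.2]
      exact div_nonpos_of_nonneg_of_nonpos (by linarith [(hpp y hy).1]) (by linarith [hy.2])
    have : w b = - (φ' b * ψ b) := by simp [hwdef, hbS.2]
    have h3 : w c ≤ 0 := hw
    nlinarith [mul_nonneg (neg_nonneg.2 hφb) hψb]

lemma nodal_pos {Q q φ φ' ψ ψ' : ℝ → ℝ} (hφ : Sol Q φ φ') (hψ : Sol q ψ ψ') (hb : Bd φ) {c : ℝ}
    (h1 : 0 < φ c) (h2 : 0 < ψ c)
    (h : ∀ x, (∀ y ∈ Set.uIcc c x, φ y ≠ 0) → ψ x ≠ 0 ∧ q x < Q x) : False := by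
  rcases le_total (φ c * ψ' c - φ' c * ψ c) 0 with hw | hw
  · exact comp_right hφ hψ hb h1 h2 (fun x hx hy => h x (by rwa [Set.uIcc_of_le hx])) hw
  · obtain ⟨M, hM⟩ := hb
    refine comp_right hφ.refl hψ.refl ⟨M, fun x => hM (-x)⟩ (c := -c) (by simpa using h1)
      (by simpa using h2) (fun x hx hy => h (-x) (fun y hy' => ?_)) (by simp only [neg_neg]; linarith)
    rw [Set.uIcc_of_ge (by linarith)] at hy'
    simpa using hy (-y) ⟨by linarith [hy'.2], by linarith [hy'.1]⟩

lemma nodal {Q q φ φ' ψ ψ' : ℝ → ℝ} (hφ : Sol Q φ φ') (hψ : Sol q ψ ψ') (hb : Bd φ) {c : ℝ}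
    (h1 : φ c ≠ 0) (h : ∀ x, (∀ y ∈ Set.uIcc c x, φ y ≠ 0) → q x < Q x) :
    ∃ z, ψ z = 0 ∧ ∀ y ∈ Set.uIcc c z, φ y ≠ 0 := by
  by_contra! hcon
  have H : ∀ x, (∀ y ∈ Set.uIcc c x, φ y ≠ 0) → ψ x ≠ 0 ∧ q x < Q x := by
    refine fun x hx => ⟨fun h0 => ?_, h x hx⟩
    obtain ⟨y, hy, hy0⟩ := hcon x h0
    exact hx y hy hy0
  have hψc : ψ c ≠ 0 := (H c (fun y hy => by simp at hy; rwa [hy])).1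
  have hb' : Bd (fun x => - φ x) := by
    obtain ⟨M, hM⟩ := hb
    exact ⟨M, fun x => by rw [abs_neg]; exact hM x⟩
  rcases lt_or_gt_of_ne h1 with a | a <;> rcases lt_or_gt_of_ne hψc with b | b
  · exact nodal_pos hφ.neg hψ.neg hb' (neg_pos.2 a) (neg_pos.2 b) (by simpa using H)
  · exact nodal_pos hφ.neg hψ hb' (neg_pos.2 a) b (by simpa using H)
  · exact nodal_pos hφ hψ.neg hb a (neg_pos.2 b) (by simpa using H)
  · exact nodal_pos hφ hψ hb a b H


lemma Sol.isolated {Q u u' : ℝ → ℝ} (hL : LB Q) (h : Sol Q u u') (hu : u ≠ 0) (a : ℝ) :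
    ∀ᶠ y in nhdsWithin a {a}ᶜ, u y ≠ 0 := by
  by_cases h0 : u a = 0
  · exact (h a).1.eventually_ne (h.deriv_ne hL hu h0)
  · exact (h.cont.continuousAt.eventually_ne h0).filter_mono nhdsWithin_le_nhds

lemma exists_finset_of_le_encard {s : Set ℝ} {N : ℕ} (h : (N : ℕ∞) ≤ s.encard) :
    ∃ t : Finset ℝ, (t : Set ℝ) ⊆ s ∧ t.card = N := by
  obtain ⟨r, hr, hrN⟩ := Set.exists_subset_encard_eq h
  have hf : r.Finite := Set.finite_of_encard_eq_coe hrN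
  refine ⟨hf.toFinset, by simpa using hr, ?_⟩
  rw [hf.encard_eq_coe_toFinset_card] at hrN
  exact_mod_cast hrN

lemma le_encard_of_finset {s : Set ℝ} {N : ℕ} {t : Finset ℝ} (ht : (t : Set ℝ) ⊆ s) (h : t.card = N) :
    (N : ℕ∞) ≤ s.encard := by
  rw [← h, ← Set.encard_coe_eq_coe_finsetCard]
  exact Set.encard_le_encard ht

lemma sturm {Q q φ φ' ψ ψ' : ℝ → ℝ} (hL : LB Q) (hφ : Sol Q φ φ') (hψ : Sol q ψ ψ') (hb : Bd φ)
    (hφ0 : φ ≠ 0) {I : Set ℝ} (hIo : IsOpen I) (hIn : I.Nonempty)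
    (hI : ∀ c ∈ I, ∀ z, z ∉ I → ∃ s ∈ Set.uIcc c z, φ s = 0)
    (hlt : ∀ x ∈ I, q x < Q x) {N : ℕ} (hN : (N : ℕ∞) ≤ ({x | φ x = 0} ∩ I).encard) :
    ((N + 1 : ℕ) : ℕ∞) ≤ ({x | ψ x = 0} ∩ I).encard := by
  obtain ⟨t, ht, htN⟩ := exists_finset_of_le_encard hN
  have hnod : ∀ c ∈ I, φ c ≠ 0 → ∃ z, z ∈ I ∧ ψ z = 0 ∧ ∀ y ∈ Set.uIcc c z, φ y ≠ 0 := by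
    intro c hc hc0
    have key : ∀ x, (∀ y ∈ Set.uIcc c x, φ y ≠ 0) → x ∈ I := by
      intro x hx
      by_contra hxI
      obtain ⟨s, hs, hs0⟩ := hI c hc x hxI
      exact hx s hs hs0
    obtain ⟨z, hz, hz'⟩ := nodal hφ hψ hb hc0 (fun x hx => hlt x (key x hx))
    exact ⟨z, key z hz', hz, hz'⟩
  have hleft : ∀ s, s ∈ t → ∃ z, z ∈ I ∧ ψ z = 0 ∧ z < s ∧ ∀ r ∈ t, r < s → r < z := by
    intro s hs
    have h1 : ∀ᶠ y in nhdsWithin s (Set.Iio s), φ y ≠ 0 :=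
      (hφ.isolated hL hφ0 s).filter_mono (nhdsWithin_mono s fun y hy => ne_of_lt hy)
    have h2 : ∀ᶠ y in nhdsWithin s (Set.Iio s), y ∈ I :=
      Filter.Eventually.filter_mono nhdsWithin_le_nhds (hIo.mem_nhds (ht hs).2)
    have h3 : ∀ᶠ y in nhdsWithin s (Set.Iio s), ∀ r ∈ t, r < s → r < y := by
      rw [Filter.eventually_all_finset]
      intro r _
      by_cases hrs : r < s
      · filter_upwards [Ioo_mem_nhdsLT hrs] with y hy _ using hy.1
      · exact Eventually.of_forall fun y h => absurd h hrs
    obtain ⟨c, ⟨⟨⟨hc1, hc2⟩, hc3⟩, hc4⟩⟩ := (((h1.and h2).and h3).and self_mem_nhdsWithin).exists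
    have hc4 : c < s := hc4
    obtain ⟨z, hzI, hz, hz'⟩ := hnod c hc2 hc1
    refine ⟨z, hzI, hz, ?_, fun r hr hrs => ?_⟩
    · by_contra! hsz
      exact hz' s (by rw [Set.uIcc_of_le (hc4.le.trans hsz)]; exact ⟨hc4.le, hsz⟩) (ht hs).1
    · by_contra! hzr
      have := hc3 r hr hrs
      exact hz' r (by rw [Set.uIcc_of_ge (hzr.trans this.le)]; exact ⟨hzr, this.le⟩) (ht hr).1
  have hright : ∃ z, z ∈ I ∧ ψ z = 0 ∧ ∀ r ∈ t, r < z := by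
    obtain ⟨a, haI, ha⟩ : ∃ a ∈ I, ∀ r ∈ t, r ≤ a := by
      rcases t.eq_empty_or_nonempty with h | h
      · obtain ⟨a, ha⟩ := hIn
        exact ⟨a, ha, by simp [h]⟩
      · exact ⟨t.max' h, (ht (t.max'_mem h)).2, fun r hr => t.le_max' r hr⟩
    have h1 : ∀ᶠ y in nhdsWithin a (Set.Ioi a), φ y ≠ 0 :=
      (hφ.isolated hL hφ0 a).filter_mono (nhdsWithin_mono a fun y hy => ne_of_gt hy)
    have h2 : ∀ᶠ y in nhdsWithin a (Set.Ioi a), y ∈ I :=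
      Filter.Eventually.filter_mono nhdsWithin_le_nhds (hIo.mem_nhds haI)
    obtain ⟨c, ⟨⟨hc1, hc2⟩, hc4⟩⟩ := ((h1.and h2).and self_mem_nhdsWithin).exists
    have hc4 : a < c := hc4
    obtain ⟨z, hzI, hz, hz'⟩ := hnod c hc2 hc1
    refine ⟨z, hzI, hz, fun r hr => ?_⟩
    by_contra! hzr
    have := (ha r hr).trans_lt hc4
    exact hz' r (by rw [Set.uIcc_of_ge (hzr.trans this.le)]; exact ⟨hzr, this.le⟩) (ht hr).1
  choose! Z hZI hZ0 hZlt hZgt using hleft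
  obtain ⟨z, hzI, hz0, hz⟩ := hright
  classical
  have hinj : Set.InjOn Z t := by
    intro r hr s hs hrs
    by_contra hne
    rcases lt_or_gt_of_ne hne with h | h
    · have := hZlt r hr
      have := hZgt s hs r hr h
      linarith
    · have := hZlt s hs
      have := hZgt r hr s hs h
      linarith
  refine le_encard_of_finset (t := insert z (t.image Z)) ?_ ?_
  · intro x hx
    simp only [Finset.coe_insert, Finset.coe_image, Set.mem_insert_iff, Set.mem_image] at hx
    rcases hx with rfl | ⟨s, hs, rfl⟩
    · exact ⟨hz0, hzI⟩
    · exact ⟨hZ0 s hs, hZI s hs⟩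
  · rw [Finset.card_insert_of_notMem, Finset.card_image_of_injOn hinj, htN]
    intro hmem
    obtain ⟨s, hs, hsz⟩ := Finset.mem_image.1 hmem
    have := hZlt s hs
    have := hz s hs
    linarith

lemma sturm_univ {Q q φ φ' ψ ψ' : ℝ → ℝ} (hL : LB Q) (hφ : Sol Q φ φ') (hψ : Sol q ψ ψ') (hb : Bd φ)
    (hφ0 : φ ≠ 0) (hlt : ∀ x, q x < Q x) {N : ℕ} (hN : (N : ℕ∞) ≤ {x | φ x = 0}.encard) :
    ((N + 1 : ℕ) : ℕ∞) ≤ {x | ψ x = 0}.encard := by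
  have := sturm hL hφ hψ hb hφ0 isOpen_univ Set.univ_nonempty (by simp) (fun x _ => hlt x) (N := N)
    (by simpa using hN)
  simpa using this

lemma persist {Q u u' : ℝ → ℝ} (hL : LB Q) (h : Sol Q u u') (hu : u ≠ 0) {us : ℕ → ℝ → ℝ}
    (hc : ∀ m, Continuous (us m)) (hlim : ∀ x, Tendsto (fun m => us m x) atTop (nhds (u x))) {T : ℝ} {N : ℕ}
    (hN : (N : ℕ∞) ≤ ({x | u x = 0} ∩ Set.Iio T).encard) :
    ∀ᶠ m in atTop, (N : ℕ∞) ≤ ({x | us m x = 0} ∩ Set.Iio T).encard := by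
  obtain ⟨t, ht, htN⟩ := exists_finset_of_le_encard hN
  have hab : ∀ s, s ∈ t → ∃ a b, a < s ∧ s < b ∧ b < T ∧ u a * u b < 0 ∧
      (∀ r ∈ t, r < s → (r + s) / 2 < a) ∧ (∀ r ∈ t, s < r → b < (r + s) / 2) := by
    intro s hs
    have hd := h.deriv_ne hL hu (ht hs).1
    have h0 : u s = 0 := (ht hs).1
    have hT : s < T := (ht hs).2
    have hslope : ∀ᶠ y in nhdsWithin s {s}ᶜ, 0 < u' s * slope u s y := by
      have := (hasDerivAt_iff_tendsto_slope.1 (h s).1).const_mul (u' s)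
      exact this.eventually (lt_mem_nhds (mul_self_pos.2 hd))
    have l1 := hslope.filter_mono (nhdsWithin_mono s (s := Set.Iio s) fun y hy => ne_of_lt hy)
    have r1 := hslope.filter_mono (nhdsWithin_mono s (s := Set.Ioi s) fun y hy => ne_of_gt hy)
    have l3 : ∀ᶠ y in nhdsWithin s (Set.Iio s), ∀ r ∈ t, r < s → (r + s) / 2 < y := by
      rw [Filter.eventually_all_finset]
      intro r _
      by_cases hrs : r < s
      · filter_upwards [Ioo_mem_nhdsLT (show (r + s) / 2 < s by linarith)] with y hy _ using hy.1
      · exact Eventually.of_forall fun y h => absurd h hrs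
    have r3 : ∀ᶠ y in nhdsWithin s (Set.Ioi s), ∀ r ∈ t, s < r → y < (r + s) / 2 := by
      rw [Filter.eventually_all_finset]
      intro r _
      by_cases hrs : s < r
      · filter_upwards [Ioo_mem_nhdsGT (show s < (r + s) / 2 by linarith)] with y hy _ using hy.2
      · exact Eventually.of_forall fun y h => absurd h hrs
    obtain ⟨a, ⟨ha1, ha3⟩, ha4⟩ := ((l1.and l3).and self_mem_nhdsWithin).exists
    obtain ⟨b, ⟨hb1, hb3⟩, hb4⟩ := ((r1.and r3).and (Ioo_mem_nhdsGT hT)).exists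
    have ha4 : a < s := ha4
    refine ⟨a, b, ha4, hb4.1, hb4.2, ?_, ha3, hb3⟩
    have ea : u a = slope u s a * (a - s) := by
      rw [slope_def_field, h0, div_mul_cancel₀ _ (by linarith), sub_zero]
    have eb : u b = slope u s b * (b - s) := by
      rw [slope_def_field, h0, div_mul_cancel₀ _ (by linarith [hb4.1]), sub_zero]
    have hAB : 0 < slope u s a * slope u s b := by
      have := mul_pos ha1 hb1
      have e : u' s * slope u s a * (u' s * slope u s b) = (u' s) ^ 2 * (slope u s a * slope u s b) := by ring
      rw [e] at this
      exact pos_of_mul_pos_right this (sq_nonneg _)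
    rw [ea, eb]
    have : 0 < (s - a) * (b - s) := mul_pos (by linarith) (by linarith [hb4.1])
    nlinarith [mul_pos hAB this]
  choose! a b has hsb hbT hneg hla hrb using hab
  have hev : ∀ᶠ m in atTop, ∀ s ∈ t, us m (a s) * us m (b s) < 0 := by
    rw [Filter.eventually_all_finset]
    intro s hs
    exact ((hlim (a s)).mul (hlim (b s))).eventually (gt_mem_nhds (hneg s hs))
  filter_upwards [hev] with m hm
  have hz : ∀ s, s ∈ t → ∃ z, a s ≤ z ∧ z ≤ b s ∧ us m z = 0 := by
    intro s hs
    have hle : a s ≤ b s := ((has s hs).trans (hsb s hs)).le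
    have : (0 : ℝ) ∈ Set.uIcc (us m (a s)) (us m (b s)) := by
      rcases mul_neg_iff.1 (hm s hs) with h' | h'
      · rw [Set.uIcc_of_ge (by linarith)]; exact ⟨h'.2.le, h'.1.le⟩
      · rw [Set.uIcc_of_le (by linarith)]; exact ⟨h'.1.le, h'.2.le⟩
    obtain ⟨z, hz, hz0⟩ := intermediate_value_uIcc ((hc m).continuousOn) this
    rw [Set.uIcc_of_le hle] at hz
    exact ⟨z, hz.1, hz.2, hz0⟩
  choose! Z hZa hZb hZ0 using hz
  classical
  have key : ∀ r ∈ t, ∀ s ∈ t, r < s → Z r < Z s := by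
    intro r hr s hs hrs
    have h1 := hla s hs r hr hrs
    have h2 := hrb r hr s hs hrs
    have := hZa s hs
    have := hZb r hr
    linarith
  have hinj : Set.InjOn Z t := by
    intro r hr s hs hrs
    by_contra hne
    rcases lt_or_gt_of_ne hne with h | h
    · exact (key r hr s hs h).ne hrs
    · exact (key s hs r hr h).ne hrs.symm
  refine le_encard_of_finset (t := t.image Z) ?_ (by rw [Finset.card_image_of_injOn hinj, htN])
  intro x hx
  simp only [Finset.coe_image, Set.mem_image] at hx
  obtain ⟨s, hs, rfl⟩ := hx
  exact ⟨hZ0 s hs, (hZb s hs).trans_lt (hbT s hs)⟩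

lemma exists_cut {s : Set ℝ} {N : ℕ} (h : (N : ℕ∞) ≤ s.encard) :
    ∃ T₀ : ℝ, ∀ T, T₀ ≤ T → (N : ℕ∞) ≤ (s ∩ Set.Iio T).encard := by
  obtain ⟨t, ht, htN⟩ := exists_finset_of_le_encard h
  obtain ⟨M, hM⟩ := t.bddAbove
  refine ⟨M + 1, fun T hT => le_encard_of_finset (t := t) (fun x hx => ⟨ht hx, ?_⟩) htN⟩
  have := hM hx
  exact Set.mem_Iio.2 (by linarith)

lemma growing {Q v v' : ℝ → ℝ} (h : Sol Q v v') {T : ℝ} (hQ : ∀ x, T ≤ x → 0 ≤ Q x)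
    (h0 : v T = 1) (h0' : v' T = 1) {x : ℝ} (hx : T ≤ x) : 1 + (x - T) ≤ v x := by
  have hpos : ∀ x, T ≤ x → 0 < v x := fun x hx => sign_const h.cont hx (by rw [h0]; norm_num)
    (fun y hy => h.no_zero hQ le_rfl (by rw [h0, h0']; norm_num) hy.1)
  have hm : MonotoneOn v' (Set.Ici T) := by
    apply monotoneOn_of_deriv_nonneg (convex_Ici T)
    · exact fun x _ => (h x).2.continuousAt.continuousWithinAt
    · exact fun x _ => (h x).2.differentiableAt.differentiableWithinAt
    · intro x hx
      rw [interior_Ici] at hx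
      rw [(h x).2.deriv]
      exact mul_nonneg (hQ x (le_of_lt hx)) (hpos x (le_of_lt hx)).le
  have hd : ∀ y, HasDerivAt (fun y => v y - y) (v' y - 1) y := fun y => (h y).1.sub (hasDerivAt_id y)
  have hm2 : MonotoneOn (fun y => v y - y) (Set.Ici T) := by
    apply monotoneOn_of_deriv_nonneg (convex_Ici T)
    · exact fun x _ => (hd x).continuousAt.continuousWithinAt
    · exact fun x _ => (hd x).differentiableAt.differentiableWithinAt
    · intro x hx
      rw [interior_Ici] at hx
      rw [(hd x).deriv]
      have := hm Set.self_mem_Ici (Set.mem_Ici.2 (le_of_lt hx)) (le_of_lt hx)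
      linarith
  have := hm2 Set.self_mem_Ici hx hx
  simp only [h0] at this
  linarith

lemma gain_pos {Q u u' : ℝ → ℝ} (hQc : Continuous Q) (h : Sol Q u u') {R T : ℝ}
    (hQ : ∀ x, R ≤ x → 0 ≤ Q x) (hp : ∀ x, R ≤ x → u x * u' x ≤ 0) (hRT : R ≤ T) (hT : 0 < u T) {N : ℕ}
    (hN : (N : ℕ∞) ≤ ({x | u x = 0} ∩ Set.Iio T).encard) :
    ∃ v v', Sol Q v v' ∧ v ≠ 0 ∧ ((N + 1 : ℕ) : ℕ∞) ≤ {x | v x = 0}.encard := by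
  obtain ⟨v, v', hv, hv0, hv0'⟩ := exists_sol hQc T 1 1
  have hQT : ∀ x, T ≤ x → 0 ≤ Q x := fun x hx => hQ x (hRT.trans hx)
  have hu : u ≠ 0 := fun h0 => by simp [h0] at hT
  set us : ℕ → ℝ → ℝ := fun m x => 1 * u x + (-(1 / ((m : ℝ) + 1))) * v x with hus
  have hsol : ∀ m, Sol Q (us m) _ := fun m => h.lin hv 1 (-(1 / ((m : ℝ) + 1)))
  have hlim : ∀ x, Tendsto (fun m => us m x) atTop (nhds (u x)) := by
    intro x
    have := ((tendsto_one_div_add_atTop_nhds_zero_nat (𝕜 := ℝ)).neg.mul_const (v x)).const_add (1 * u x)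
    simpa [hus] using this
  have e1 := persist (LB.of_continuous hQc) h hu (fun m => (hsol m).cont) hlim hN
  have e2 := (hlim T).eventually (lt_mem_nhds hT)
  obtain ⟨m, hm1, hm2⟩ := (e1.and e2).exists
  refine ⟨us m, _, hsol m, fun h0 => by simp [h0] at hm2, ?_⟩
  set X := T + |u R| * (m + 1) with hX
  have hTX : T ≤ X := by
    have : 0 ≤ |u R| * ((m : ℝ) + 1) := by positivity
    linarith
  have hneg : us m X ≤ 0 := by
    have h1 := growing hv hQT hv0 hv0' hTX
    have h2 := (le_abs_self _).trans (h.anti_bdd hp (hRT.trans hTX))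
    have hm0 : (0 : ℝ) < m + 1 := by positivity
    have h3 : |u R| * (m + 1) ≤ v X := by linarith
    have h4 : |u R| ≤ 1 / ((m : ℝ) + 1) * v X := by
      rw [one_div, ← div_eq_inv_mul, le_div_iff₀ hm0]
      exact h3
    simp only [hus]
    linarith
  obtain ⟨z, hz, hz0⟩ := intermediate_value_Icc' hTX (hsol m).cont.continuousOn
    (⟨hneg, hm2.le⟩ : (0 : ℝ) ∈ Set.Icc (us m X) (us m T))
  obtain ⟨t, ht, htN⟩ := exists_finset_of_le_encard hm1
  classical
  refine le_encard_of_finset (t := insert z t) ?_ ?_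
  · intro x hx
    simp only [Finset.coe_insert, Set.mem_insert_iff] at hx
    rcases hx with rfl | hx
    · exact hz0
    · exact (ht hx).1
  · rw [Finset.card_insert_of_notMem, htN]
    intro hmem
    exact absurd (ht hmem).2 (not_lt.2 hz.1)

lemma gain {Q u u' : ℝ → ℝ} (hQc : Continuous Q) (h : Sol Q u u') (hu : u ≠ 0) {R : ℝ}
    (hQ : ∀ x, R ≤ x → 0 ≤ Q x) (hp : ∀ x, R ≤ x → u x * u' x ≤ 0) {N : ℕ}
    (hN : (N : ℕ∞) ≤ {x | u x = 0}.encard) :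
    ∃ v v', Sol Q v v' ∧ v ≠ 0 ∧ ((N + 1 : ℕ) : ℕ∞) ≤ {x | v x = 0}.encard := by
  obtain ⟨T₀, hT₀⟩ := exists_cut hN
  have : ∃ T, max R T₀ ≤ T ∧ u T ≠ 0 := by
    have h1 := (h.isolated (LB.of_continuous hQc) hu (max R T₀)).filter_mono
      (nhdsWithin_mono _ (s := Set.Ioi (max R T₀)) fun y hy => ne_of_gt hy)
    obtain ⟨T, hT1, hT2⟩ := (h1.and self_mem_nhdsWithin).exists
    exact ⟨T, le_of_lt hT2, hT1⟩
  obtain ⟨T, hT1, hT2⟩ := this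
  have hR : R ≤ T := (le_max_left _ _).trans hT1
  have hc := hT₀ T ((le_max_right _ _).trans hT1)
  rcases lt_or_gt_of_ne hT2 with h' | h'
  · exact gain_pos hQc h.neg hQ (by simpa using hp) hR (neg_pos.2 h') (by simpa using hc)
  · exact gain_pos hQc h hQ hp hR h' hc


lemma encard_refl (f : ℝ → ℝ) : {x | f (-x) = 0}.encard = {x | f x = 0}.encard := by
  have : {x | f (-x) = 0} = Neg.neg '' {x | f x = 0} := by
    ext x; simp [Set.mem_neg]
  rw [this, neg_injective.encard_image]

lemma encard_refl_cut (f : ℝ → ℝ) (R : ℝ) :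
    ({x | f (-x) = 0} ∩ Set.Ioi R).encard = ({x | f x = 0} ∩ Set.Iio (-R)).encard := by
  have : {x | f (-x) = 0} ∩ Set.Ioi R = Neg.neg '' ({x | f x = 0} ∩ Set.Iio (-R)) := by
    ext x; simp [Set.mem_neg]
  rw [this, neg_injective.encard_image]

lemma gain_both {Q u u' : ℝ → ℝ} (hQc : Continuous Q) (h : Sol Q u u') (hu : u ≠ 0) {R : ℝ}
    (hQ : ∀ x, R ≤ |x| → 0 ≤ Q x) (hR : 0 ≤ R)
    (hp : (∀ x, R ≤ x → u x * u' x ≤ 0) ∨ (∀ x, R ≤ x → u (-x) * (-u' (-x)) ≤ 0)) {N : ℕ}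
    (hN : (N : ℕ∞) ≤ {x | u x = 0}.encard) :
    ∃ v v', Sol Q v v' ∧ v ≠ 0 ∧ ((N + 1 : ℕ) : ℕ∞) ≤ {x | v x = 0}.encard := by
  rcases hp with hp | hp
  · exact gain hQc h hu (fun x hx => hQ x (hx.trans (le_abs_self _))) hp hN
  · have hu' : (fun x => u (-x)) ≠ 0 := fun h0 => hu (by
      funext x
      have := congrFun h0 (-x)
      simpa using this)
    obtain ⟨v, v', hv, hv0, hvN⟩ := gain (Q := fun x => Q (-x)) (by fun_prop) h.refl hu' (R := R)
      (fun x hx => hQ (-x) (by rw [abs_neg]; exact hx.trans (le_abs_self _))) hp (N := N)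
      (by rw [encard_refl]; exact hN)
    refine ⟨_, _, by simpa using hv.refl, fun h0 => hv0 ?_, ?_⟩
    · funext x
      have := congrFun h0 (-x)
      simpa using this
    · rw [encard_refl]; exact hvN

lemma count_mid {A : Set ℝ} {R : ℝ} {k a b : ℕ} (ha : (A ∩ Set.Ioi R).encard ≤ a)
    (hb : (A ∩ Set.Iio (-R)).encard ≤ b) (h : ((k + a + b : ℕ) : ℕ∞) ≤ A.encard) :
    (k : ℕ∞) ≤ (A ∩ Set.Icc (-R) R).encard := by
  have hsub : A ⊆ (A ∩ Set.Icc (-R) R) ∪ (A ∩ Set.Ioi R) ∪ (A ∩ Set.Iio (-R)) := by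
    intro x hx
    rcases lt_or_ge R x with h1 | h1
    · exact Or.inl (Or.inr ⟨hx, h1⟩)
    rcases lt_or_ge x (-R) with h2 | h2
    · exact Or.inr ⟨hx, h2⟩
    · exact Or.inl (Or.inl ⟨hx, h2, h1⟩)
  have h1 := h.trans (Set.encard_le_encard hsub)
  have h2 : ((k + a + b : ℕ) : ℕ∞) ≤ (A ∩ Set.Icc (-R) R).encard + a + b :=
    h1.trans ((Set.encard_union_le _ _).trans (add_le_add ((Set.encard_union_le _ _).trans
      (add_le_add le_rfl ha)) hb))
  generalize (A ∩ Set.Icc (-R) R).encard = x at h2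
  induction x using ENat.recTopCoe with
  | top => simp
  | coe x =>
    norm_cast at h2 ⊢
    omega

lemma limit_zeros {W u u' : ℝ → ℝ} (hW : LB W) {e : ℝ} {es : ℕ → ℝ} {us us' : ℕ → ℝ → ℝ}
    (hu : Sol (fun x => W x - e) u u') (hL : LB (fun x => W x - e)) (hu0 : u ≠ 0)
    (hus : ∀ m, Sol (fun x => W x - es m) (us m) (us' m))
    (he : Tendsto es atTop (nhds e)) (h0 : Tendsto (fun m => us m 0) atTop (nhds (u 0)))
    (h0' : Tendsto (fun m => us' m 0) atTop (nhds (u' 0))) {R : ℝ} {k : ℕ}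
    (hz : ∀ᶠ m in atTop, (k : ℕ∞) ≤ ({x | us m x = 0} ∩ Set.Icc (-R) R).encard) :
    (k : ℕ∞) ≤ {x | u x = 0}.encard := by
  obtain ⟨m₀, hm₀⟩ := eventually_atTop.1 hz
  have : ∀ m : ℕ, ∃ z : Fin k → ℝ, StrictMono z ∧ (∀ i, us (m + m₀) (z i) = 0) ∧
      z ∈ Set.pi Set.univ (fun _ => Set.Icc (-R) R) := by
    intro m
    obtain ⟨t, ht, htk⟩ := exists_finset_of_le_encard (hm₀ (m + m₀) (by omega))
    refine ⟨t.orderEmbOfFin htk, (t.orderEmbOfFin htk).strictMono, fun i => ?_, fun i _ => ?_⟩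
    · exact (ht (t.orderEmbOfFin_mem htk i)).1
    · exact (ht (t.orderEmbOfFin_mem htk i)).2
  choose z hzm hz0 hzR using this
  have hcomp : IsCompact (Set.pi Set.univ (fun _ : Fin k => Set.Icc (-R) R)) :=
    isCompact_univ_pi fun _ => isCompact_Icc
  obtain ⟨ζ, -, ψ, hψ, hlim⟩ := hcomp.tendsto_subseq hzR
  have hlim' : ∀ i, Tendsto (fun m => z (ψ m) i) atTop (nhds (ζ i)) := fun i =>
    (tendsto_pi_nhds.1 hlim) i
  have hsh : Tendsto (fun m => ψ m + m₀) atTop atTop :=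
    tendsto_atTop_mono (fun m => Nat.le_add_right _ _) hψ.tendsto_atTop
  have hconv : ∀ {xs : ℕ → ℝ} {x : ℝ}, Tendsto xs atTop (nhds x) → 
      Tendsto (fun m => us (ψ m + m₀) (xs m)) atTop (nhds (u x)) ∧
      Tendsto (fun m => us' (ψ m + m₀) (xs m)) atTop (nhds (u' x)) := fun hx =>
    conv_joint hW hu (es := fun m => es (ψ m + m₀)) (fun m => hus (ψ m + m₀)) (he.comp hsh)
      (h0.comp hsh) (h0'.comp hsh) hx
  have hζ0 : ∀ i, u (ζ i) = 0 := by
    intro i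
    have := (hconv (hlim' i)).1
    simp only [hz0] at this
    exact (tendsto_nhds_unique tendsto_const_nhds this).symm
  have hne : ∀ i j, i < j → ζ i ≠ ζ j := by
    intro i j hij heq
    have : ∀ m, ∃ ξ ∈ Set.Ioo (z (ψ m) i) (z (ψ m) j), us' (ψ m + m₀) ξ = 0 := fun m =>
      exists_hasDerivAt_eq_zero (hzm _ hij) (hus _).cont.continuousOn (by rw [hz0, hz0])
        (fun x _ => (hus _ x).1)
    choose ξ hξ hξ0 using this
    have hl : Tendsto ξ atTop (nhds (ζ i)) :=
      tendsto_of_tendsto_of_tendsto_of_le_of_le (hlim' i) (heq ▸ hlim' j) (fun m => (hξ m).1.le)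
        (fun m => (hξ m).2.le)
    have := (hconv hl).2
    simp only [hξ0] at this
    exact hu.deriv_ne hL hu0 (hζ0 i) (tendsto_nhds_unique tendsto_const_nhds this).symm
  have hinj : Function.Injective ζ := by
    intro i j hij
    by_contra h
    rcases lt_or_gt_of_ne h with h | h
    · exact hne i j h hij
    · exact hne j i h hij.symm
  classical
  refine le_encard_of_finset (t := Finset.univ.image ζ) ?_ ?_
  · intro x hx
    simp only [Finset.coe_image, Finset.coe_univ, Set.image_univ, Set.mem_range] at hx
    obtain ⟨i, rfl⟩ := hx
    exact hζ0 i
  · rw [Finset.card_image_of_injective _ hinj, Finset.card_univ, Fintype.card_fin]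

lemma right_dich {W u u' : ℝ → ℝ} (hW : LB W) {e : ℝ} {es : ℕ → ℝ} {us us' : ℕ → ℝ → ℝ}
    (hLs : ∀ m, LB (fun x => W x - es m))
    (hu : Sol (fun x => W x - e) u u')
    (hus : ∀ m, Sol (fun x => W x - es m) (us m) (us' m)) (hus0 : ∀ m, us m ≠ 0)
    (he : Tendsto es atTop (nhds e)) (h0 : Tendsto (fun m => us m 0) atTop (nhds (u 0)))
    (h0' : Tendsto (fun m => us' m 0) atTop (nhds (u' 0))) {R : ℝ}
    (hQ : ∀ m x, R ≤ x → 0 ≤ W x - es m) :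
    ∃ (a : ℕ) (R' : ℝ), (∀ r, R' ≤ r → ∀ᶠ m in atTop, ({x | us m x = 0} ∩ Set.Ioi r).encard ≤ a) ∧
      (a = 0 ∨ (a = 1 ∧ ∀ x, R ≤ x → u x * u' x ≤ 0)) := by
  by_cases hd : ∀ x, R ≤ x → u x * u' x ≤ 0
  · refine ⟨1, R, fun r hr => Eventually.of_forall fun m => ?_, Or.inr ⟨rfl, hd⟩⟩
    rw [Nat.cast_one, Set.encard_le_one_iff]
    rintro x y ⟨hx0, hx⟩ ⟨hy0, hy⟩
    by_contra hne
    have hx : r < x := hx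
    have hy : r < y := hy
    rcases lt_or_gt_of_ne hne with h | h
    · exact (hus m).one_zero (hLs m) (hus0 m) (R := R) (hQ m) (by linarith) h hx0 hy0
    · exact (hus m).one_zero (hLs m) (hus0 m) (R := R) (hQ m) (by linarith) h hy0 hx0
  · push Not at hd
    obtain ⟨x₁, hx₁, hp⟩ := hd
    have hc := conv_joint hW hu hus he h0 h0' (tendsto_const_nhds (x := x₁))
    have hev := (hc.1.mul hc.2).eventually (lt_mem_nhds hp)
    refine ⟨0, x₁, fun r hr => ?_, Or.inl rfl⟩
    filter_upwards [hev] with m hm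
    have : {x | us m x = 0} ∩ Set.Ioi r = ∅ := by
      ext x
      simp only [Set.mem_inter_iff, Set.mem_setOf_eq, Set.mem_Ioi, Set.mem_empty_iff_false, iff_false, not_and]
      intro hx0 hx
      exact (hus m).no_zero (hQ m) hx₁ hm (by linarith) hx0
    rw [this]
    simp

def Mset (W : ℝ → ℝ) (n : ℕ) : Set ℝ :=
  {e | ∀ u u' : ℝ → ℝ, Sol (fun x => W x - e) u u' → u ≠ 0 → ¬ ((n + 2 : ℕ) : ℕ∞) ≤ {x | u x = 0}.encard}

lemma zero_mem_Mset {W : ℝ → ℝ} (hc : Continuous W) (h0 : ∀ x, 0 ≤ W x) (n : ℕ) : (0 : ℝ) ∈ Mset W n := by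
  intro u u' hu hu0 hN
  have h2 : ((2 : ℕ) : ℕ∞) ≤ {x | u x = 0}.encard := le_trans (by norm_cast; omega) hN
  obtain ⟨t, ht, ht2⟩ := exists_finset_of_le_encard h2
  obtain ⟨x, y, hxy, rfl⟩ := Finset.card_eq_two.1 ht2
  have hx : u x = 0 := ht (by simp)
  have hy : u y = 0 := ht (by simp)
  have hL : LB (fun x => W x - 0) := LB.of_continuous (by fun_prop)
  rcases lt_or_gt_of_ne hxy with h | h
  · exact hu.one_zero hL hu0 (R := x) (fun z _ => by simpa using h0 z) le_rfl h hx hy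
  · exact hu.one_zero hL hu0 (R := y) (fun z _ => by simpa using h0 z) le_rfl h hy hx

lemma sSup_mem_Mset {W : ℝ → ℝ} (hc : Continuous W) {n : ℕ} (hne : (Mset W n).Nonempty)
    (hb : BddAbove (Mset W n)) : sSup (Mset W n) ∈ Mset W n := by
  intro u u' hu hu0 hN
  obtain ⟨es, -, hlim, hes⟩ := exists_seq_tendsto_sSup hne hb
  have : ∀ m, ∃ v v', Sol (fun x => W x - es m) v v' ∧ v 0 = u 0 ∧ v' 0 = u' 0 := fun m =>
    exists_sol (by fun_prop) 0 _ _
  choose us us' hus h0 h0' using this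
  have hconv : ∀ x, Tendsto (fun m => us m x) atTop (nhds (u x)) := fun x =>
    (conv_joint (LB.of_continuous hc) hu hus hlim (by simp [h0]) (by simp [h0']) (tendsto_const_nhds (x := x))).1
  obtain ⟨T, hT⟩ := exists_cut hN
  have e1 := persist (LB.of_continuous (by fun_prop)) hu hu0 (fun m => (hus m).cont) hconv (hT T le_rfl)
  obtain ⟨x₀, hx₀⟩ := Function.ne_iff.1 hu0
  have e2 := (hconv x₀).eventually_ne hx₀
  obtain ⟨m, hm1, hm2⟩ := (e1.and e2).exists
  exact hes m (us m) (us' m) (hus m) (fun h => hm2 (by simp [h])) 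
    (hm1.trans (Set.encard_le_encard Set.inter_subset_left))

lemma integrable_of_ends {f : ℝ → ℝ} (hf : Continuous f) {R : ℝ} (h1 : IntegrableOn f (Set.Ioi R))
    (h2 : IntegrableOn (fun x => f (-x)) (Set.Ioi R)) : Integrable f := by
  have h3 : IntegrableOn f (Set.Iio (-R)) := by
    have := (Measure.measurePreserving_neg (volume : Measure ℝ)).integrableOn_comp_preimage
      (Homeomorph.neg ℝ).measurableEmbedding (f := f) (s := Set.Iio (-R))
    rw [← this]
    have hset : (Homeomorph.neg ℝ) ⁻¹' Set.Iio (-R) = Set.Ioi R := by ext x; simp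
    have hset' : (Neg.neg : ℝ → ℝ) ⁻¹' Set.Iio (-R) = Set.Ioi R := by ext x; simp
    first
      | rw [hset']; exact h2
      | rw [hset]; exact h2
  have h4 : IntegrableOn f (Set.Icc (-R) R) := hf.integrableOn_Icc
  rw [← integrableOn_univ]
  refine ((h3.union h4).union h1).mono_set ?_
  intro x _
  rcases lt_or_ge R x with h1 | h1
  · exact Or.inr h1
  rcases lt_or_ge x (-R) with h2 | h2
  · exact Or.inl (Or.inl h2)
  · exact Or.inl (Or.inr ⟨h2, h1⟩)

lemma circle_compact : IsCompact {p : ℝ × ℝ | p.1 ^ 2 + p.2 ^ 2 = 1} := by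
  refine (isCompact_Icc (a := ((-1, -1) : ℝ × ℝ)) (b := (1, 1))).of_isClosed_subset ?_ ?_
  · exact isClosed_eq (by fun_prop) (by fun_prop)
  · rintro ⟨x, y⟩ h
    simp only [Set.mem_setOf_eq] at h
    refine ⟨⟨?_, ?_⟩, ⟨?_, ?_⟩⟩ <;> simp only <;> nlinarith [sq_nonneg x, sq_nonneg y]

lemma exists_eig {W : ℝ → ℝ} (hc : Continuous W) (h0 : ∀ x, 0 ≤ W x)
    (htop : ∀ Λ : ℝ, ∃ R : ℝ, ∀ x, R ≤ |x| → Λ ≤ W x) {n : ℕ} (hb : BddAbove (Mset W n)) :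
    ∃ e ∈ Mset W n, ∃ u u', Sol (fun x => W x - e) u u' ∧ u ≠ 0 ∧ Integrable (fun x => u x ^ 2) ∧
      (n : ℕ∞) ≤ {x | u x = 0}.encard ∧ ¬ ((n + 1 : ℕ) : ℕ∞) ≤ {x | u x = 0}.encard ∧
      (∀ N : ℕ, (N : ℕ∞) ≤ {x | u x = 0}.encard → ∃ v v', Sol (fun x => W x - e) v v' ∧ v ≠ 0 ∧ 
        ((N + 1 : ℕ) : ℕ∞) ≤ {x | v x = 0}.encard) := by
  have heM := sSup_mem_Mset hc ⟨0, zero_mem_Mset hc h0 n⟩ hb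
  set e := sSup (Mset W n) with he
  have hseq : ∀ m : ℕ, ∃ u u', Sol (fun x => W x - (e + 1 / ((m : ℝ) + 1))) u u' ∧ u ≠ 0 ∧
      ((n + 2 : ℕ) : ℕ∞) ≤ {x | u x = 0}.encard ∧ (u 0, u' 0) ∈ {p : ℝ × ℝ | p.1 ^ 2 + p.2 ^ 2 = 1} := by
    intro m
    have hpos : (0 : ℝ) < 1 / ((m : ℝ) + 1) := by positivity
    have : e + 1 / ((m : ℝ) + 1) ∉ Mset W n := fun h => by
      have := le_csSup hb h
      linarith
    simp only [Mset, Set.mem_setOf_eq, not_forall, not_not] at this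
    obtain ⟨u, u', hu, hu0, hN⟩ := this
    set S := u 0 ^ 2 + u' 0 ^ 2 with hS
    have hSpos : 0 < S := by
      rcases (add_nonneg (sq_nonneg (u 0)) (sq_nonneg (u' 0))).lt_or_eq with h | h
      · exact h
      · exfalso
        have h1 : u 0 = 0 := by nlinarith [sq_nonneg (u 0), sq_nonneg (u' 0)]
        have h2 : u' 0 = 0 := by nlinarith [sq_nonneg (u 0), sq_nonneg (u' 0)]
        exact hu0 (hu.unique_zero (LB.of_continuous (by fun_prop)) h1 h2)
    have hr : 0 < (√S)⁻¹ := by positivity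
    refine ⟨_, _, hu.lin hu (√S)⁻¹ 0, ?_, ?_, ?_⟩
    · obtain ⟨x, hx⟩ := Function.ne_iff.1 hu0
      refine Function.ne_iff.2 ⟨x, ?_⟩
      simp only [zero_mul, add_zero, Pi.zero_apply]
      exact mul_ne_zero hr.ne' hx
    · refine hN.trans (Set.encard_le_encard fun x hx => ?_)
      simp only [Set.mem_setOf_eq] at hx ⊢
      simp [hx]
    · simp only [Set.mem_setOf_eq, zero_mul, add_zero, mul_pow, ← mul_add, ← hS]
      rw [inv_pow, Real.sq_sqrt hSpos.le, inv_mul_cancel₀ hSpos.ne']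
  choose ws ws' hws hws0 hwsN hwsC using hseq
  obtain ⟨⟨α, β⟩, hαβ, ψ, hψ, hlim⟩ := circle_compact.tendsto_subseq hwsC
  obtain ⟨u, u', hu, hu1, hu2⟩ := exists_sol (Q := fun x => W x - e) (by fun_prop) 0 α β
  have hL : LB (fun x => W x - e) := LB.of_continuous (by fun_prop)
  set es : ℕ → ℝ := fun m => e + 1 / ((ψ m : ℝ) + 1) with hes
  set us := fun m => ws (ψ m)
  set us' := fun m => ws' (ψ m)
  have hus : ∀ m, Sol (fun x => W x - es m) (us m) (us' m) := fun m => hws (ψ m)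
  have hus0 : ∀ m, us m ≠ 0 := fun m => hws0 (ψ m)
  have helim : Tendsto es atTop (nhds e) := by
    have := ((tendsto_one_div_add_atTop_nhds_zero_nat (𝕜 := ℝ)).comp hψ.tendsto_atTop).const_add e
    simpa [hes] using this
  have hd0 : Tendsto (fun m => us m 0) atTop (nhds (u 0)) := by
    rw [hu1]; exact (continuous_fst.tendsto _).comp hlim
  have hd0' : Tendsto (fun m => us' m 0) atTop (nhds (u' 0)) := by
    rw [hu2]; exact (continuous_snd.tendsto _).comp hlim
  have hu0 : u ≠ 0 := by
    intro h
    have h1 : u 0 = 0 := by simp [h]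
    have h2 : u' 0 = 0 := by
      have := (hu 0).1
      rw [h] at this
      exact this.unique (hasDerivAt_const 0 (0 : ℝ))
    rw [← hu1, ← hu2, h1, h2] at hαβ
    simp at hαβ
  obtain ⟨R₀, hR₀⟩ := htop (e + 1)
  set R := |R₀|
  have hRR : ∀ x, R ≤ |x| → e + 1 ≤ W x := fun x hx => hR₀ x ((le_abs_self R₀).trans hx)
  have hR0 : 0 ≤ R := abs_nonneg _
  have hesle : ∀ m, es m ≤ e + 1 := by
    intro m
    have : 1 / ((ψ m : ℝ) + 1) ≤ 1 := by
      rw [div_le_one (by positivity)]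
      have : (0 : ℝ) ≤ ψ m := by positivity
      linarith
    simp only [hes]; linarith
  have hQ : ∀ x, R ≤ |x| → 1 ≤ W x - e := fun x hx => by linarith [hRR x hx]
  have hW := LB.of_continuous hc
  obtain ⟨a, Ra, ha, ha'⟩ := right_dich hW (fun m => LB.of_continuous (by fun_prop)) hu hus hus0 helim hd0 hd0'
    (R := R) (fun m x hx => by linarith [hRR x (hx.trans (le_abs_self x)), hesle m])
  obtain ⟨b, Rb, hb, hb'⟩ := right_dich hW.neg_comp (fun m => LB.of_continuous (by fun_prop)) hu.refl
    (fun m => (hus m).refl) (fun m h => hus0 m (by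
      funext x
      have := congrFun h (-x)
      simpa using this)) helim (by simpa using hd0) (by simpa using hd0'.neg)
    (R := R) (fun m x hx => by
      linarith [hRR (-x) (by rw [abs_neg]; exact hx.trans (le_abs_self x)), hesle m])
  have hab : a ≤ 1 ∧ b ≤ 1 := by
    constructor
    · rcases ha' with h | h <;> omega
    · rcases hb' with h | h <;> omega
  have hcount : ((n + 2 - a - b : ℕ) : ℕ∞) ≤ {x | u x = 0}.encard := by
    refine limit_zeros hW hu hL hu0 hus helim hd0 hd0' (R := max Ra Rb) ?_
    filter_upwards [ha _ (le_max_left Ra Rb), hb _ (le_max_right Ra Rb)] with m hm1 hm2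
    rw [encard_refl_cut (us m)] at hm2
    refine count_mid hm1 hm2 ?_
    have : n + 2 - a - b + a + b = n + 2 := by omega
    rw [this]
    exact hwsN _
  have hgain : ((∀ x, R ≤ x → u x * u' x ≤ 0) ∨ (∀ x, R ≤ x → u (-x) * (-u' (-x)) ≤ 0)) →
      ¬ ((n + 1 : ℕ) : ℕ∞) ≤ {x | u x = 0}.encard := by
    intro hp hN
    obtain ⟨v, v', hv, hv0, hvN⟩ := gain_both (by fun_prop) hu hu0 (R := R)
      (fun x hx => by linarith [hQ x hx]) hR0 hp hN
    exact heM v v' hv hv0 hvN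
  have hboth : (∀ x, R ≤ x → u x * u' x ≤ 0) ∧ (∀ x, R ≤ x → u (-x) * (-u' (-x)) ≤ 0) := by
    rcases ha' with rfl | ⟨rfl, hDR⟩ <;> rcases hb' with rfl | ⟨rfl, hDL⟩
    · exact absurd hcount (heM u u' hu hu0)
    · exact absurd hcount (hgain (Or.inr hDL))
    · exact absurd hcount (hgain (Or.inl hDR))
    · exact ⟨hDR, hDL⟩
  refine ⟨e, heM, u, u', hu, hu0, ?_, ?_, hgain (Or.inl hboth.1), ?_⟩
  · refine integrable_of_ends (hu.cont.pow 2) (R := R) ?_ ?_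
    · exact hu.L2_right (fun x hx => hQ x (hx.trans (le_abs_self x))) hboth.1
    · exact hu.refl.L2_right (fun x hx => hQ (-x) (by rw [abs_neg]; exact hx.trans (le_abs_self x))) hboth.2
  · refine le_trans ?_ hcount
    have : n ≤ n + 2 - a - b := by omega
    exact_mod_cast this
  · intro N hN
    exact gain_both (by fun_prop) hu hu0 (R := R) (fun x hx => by linarith [hQ x hx]) hR0 (Or.inl hboth.1) hN


noncomputable def herm (b : ℝ) : ℕ → Polynomial ℝ
  | 0 => 1
  | n + 1 => Polynomial.C (2 * b) * Polynomial.X * herm b n - Polynomial.derivative (herm b n)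

lemma herm_deriv_of (b : ℝ) (n : ℕ)
    (h : Polynomial.derivative (Polynomial.derivative (herm b n)) =
      Polynomial.C (2 * b) * Polynomial.X * Polynomial.derivative (herm b n) - Polynomial.C (2 * n * b) * herm b n) :
    Polynomial.derivative (herm b (n + 1)) = Polynomial.C (2 * (n + 1) * b) * herm b n := by
  simp only [herm, Polynomial.derivative_sub, Polynomial.derivative_mul, h, Polynomial.derivative_C,
    Polynomial.derivative_X]
  simp only [Polynomial.C_mul, Polynomial.C_add, Polynomial.C_1]
  ring

lemma herm_ode (b : ℝ) (n : ℕ) :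
    Polynomial.derivative (Polynomial.derivative (herm b n)) =
      Polynomial.C (2 * b) * Polynomial.X * Polynomial.derivative (herm b n) - Polynomial.C (2 * n * b) * herm b n := by
  induction n with
  | zero => simp [herm]
  | succ n ih =>
    have h := herm_deriv_of b n ih
    rw [h]
    simp only [Polynomial.derivative_mul, Polynomial.derivative_C, herm]
    push_cast
    simp only [Polynomial.C_mul, Polynomial.C_add, Polynomial.C_1]
    ring

lemma herm_ne {b : ℝ} (hb : 0 < b) (n : ℕ) : herm b n ≠ 0 := by
  induction n with
  | zero => simp [herm]
  | succ n ih =>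
    intro h
    have h1 := herm_deriv_of b n (herm_ode b n)
    rw [h] at h1
    simp only [Polynomial.derivative_zero] at h1
    have := mul_eq_zero.1 h1.symm
    rcases this with h2 | h2
    · rw [Polynomial.C_eq_zero] at h2
      have : 0 < 2 * ((n:ℝ) + 1) * b := by positivity
      linarith
    · exact ih h2

lemma herm_deg (b : ℝ) (n : ℕ) : (herm b n).natDegree ≤ n := by
  induction n with
  | zero => simp [herm]
  | succ n ih =>
    refine (Polynomial.natDegree_sub_le _ _).trans (max_le ?_ ?_)
    · refine Polynomial.natDegree_mul_le.trans ?_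
      have : (Polynomial.C (2 * b) * Polynomial.X : Polynomial ℝ).natDegree ≤ 1 :=
        (Polynomial.natDegree_C_mul_le _ _).trans Polynomial.natDegree_X_le
      omega
    · have := Polynomial.natDegree_derivative_le (herm b n)
      omega

lemma bd_poly {b : ℝ} (hb : 0 < b) (P : Polynomial ℝ) :
    Bd (fun y => P.eval y * Real.exp (-(b * y ^ 2 / 2))) := by
  induction P using Polynomial.induction_on' with
  | add p q hp hq =>
    obtain ⟨M, hM⟩ := hp
    obtain ⟨N, hN⟩ := hq
    refine ⟨M + N, fun x => ?_⟩
    show |(p + q).eval x * _| ≤ _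
    rw [Polynomial.eval_add, add_mul]
    exact (abs_add_le _ _).trans (add_le_add (hM x) (hN x))
  | monomial n a =>
    refine ⟨|a| * (n.factorial * Real.exp (1 / (2 * b))), fun y => ?_⟩
    show |(Polynomial.monomial n a).eval y * _| ≤ _
    rw [Polynomial.eval_monomial, abs_mul, abs_mul, abs_pow, Real.abs_exp, mul_assoc]
    refine mul_le_mul_of_nonneg_left ?_ (abs_nonneg a)
    have h1 := Real.pow_div_factorial_le_exp |y| (abs_nonneg y) n
    have h2 : (0:ℝ) < n.factorial := by positivity
    rw [div_le_iff₀ h2] at h1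
    calc |y| ^ n * Real.exp (-(b * y ^ 2 / 2)) ≤ (Real.exp |y| * n.factorial) * Real.exp (-(b * y ^ 2 / 2)) := by
          gcongr
      _ = n.factorial * Real.exp (|y| - b * y ^ 2 / 2) := by
          rw [sub_eq_add_neg, Real.exp_add]; ring
      _ ≤ _ := by
          gcongr
          rw [← sq_abs y, sub_le_iff_le_add, ← sub_nonneg]
          have : 1 / (2 * b) + b * |y| ^ 2 / 2 - |y| = (b * |y| - 1) ^ 2 / (2 * b) := by
            field_simp; ring
          rw [this]; positivity

noncomputable def hf (b c : ℝ) (n : ℕ) (x : ℝ) : ℝ :=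
  (herm b n).eval (x - c / b) * Real.exp (-(b * (x - c / b) ^ 2 / 2))

noncomputable def hf' (b c : ℝ) (n : ℕ) (x : ℝ) : ℝ :=
  ((Polynomial.derivative (herm b n)).eval (x - c / b) - b * (x - c / b) * (herm b n).eval (x - c / b)) *
    Real.exp (-(b * (x - c / b) ^ 2 / 2))

lemma hf_sol {b : ℝ} (hb : 0 < b) (c : ℝ) (n : ℕ) :
    Sol (fun x => (b * x - c) ^ 2 - (2 * n + 1) * b) (hf b c n) (hf' b c n) := by
  intro x
  have hy : HasDerivAt (fun x : ℝ => x - c / b) 1 x := (hasDerivAt_id x).sub_const _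
  have hP : HasDerivAt (fun x : ℝ => (herm b n).eval (x - c / b))
      ((Polynomial.derivative (herm b n)).eval (x - c / b)) x :=
    (HasDerivAt.comp x (h₂ := fun y => (herm b n).eval y) ((herm b n).hasDerivAt (x - c / b)) hy).congr_deriv (by ring)
  have hP' : HasDerivAt (fun x : ℝ => (Polynomial.derivative (herm b n)).eval (x - c / b))
      ((Polynomial.derivative (Polynomial.derivative (herm b n))).eval (x - c / b)) x :=
    (HasDerivAt.comp x (h₂ := fun y => (Polynomial.derivative (herm b n)).eval y) ((Polynomial.derivative (herm b n)).hasDerivAt (x - c / b)) hy).congr_deriv (by ring)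
  have hE : HasDerivAt (fun x : ℝ => Real.exp (-(b * (x - c / b) ^ 2 / 2)))
      (Real.exp (-(b * (x - c / b) ^ 2 / 2)) * (-(b * (x - c / b)))) x := by
    have : HasDerivAt (fun x : ℝ => -(b * (x - c / b) ^ 2 / 2)) (-(b * (x - c / b))) x :=
      ((((hy.pow 2).const_mul b).div_const 2).neg).congr_deriv (by push_cast; ring)
    exact this.exp
  constructor
  · exact (hP.mul hE).congr_deriv (by simp only [hf']; ring)
  · refine ((hP'.sub ((hy.const_mul b).mul hP)).mul hE).congr_deriv ?_
    have hbx : b * x - c = b * (x - c / b) := by field_simp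
    rw [herm_ode]
    simp only [hbx, hf, Polynomial.eval_sub, Polynomial.eval_mul, Polynomial.eval_C, Polynomial.eval_X, Pi.sub_apply, Pi.mul_apply]
    ring

lemma hf_bd {b : ℝ} (hb : 0 < b) (c : ℝ) (n : ℕ) : Bd (hf b c n) := by
  obtain ⟨M, hM⟩ := bd_poly hb (herm b n)
  exact ⟨M, fun x => hM (x - c / b)⟩

lemma hf_lt {b : ℝ} (hb : 0 < b) (c : ℝ) (n : ℕ) : ¬ ((n + 1 : ℕ) : ℕ∞) ≤ {x | hf b c n x = 0}.encard := by
  intro h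
  obtain ⟨t, ht, hc⟩ := exists_finset_of_le_encard h
  have hsub : t.image (fun x => x - c / b) ⊆ (herm b n).roots.toFinset := by
    intro y hy
    obtain ⟨x, hx, rfl⟩ := Finset.mem_image.1 hy
    have : hf b c n x = 0 := ht hx
    rw [Multiset.mem_toFinset, Polynomial.mem_roots (herm_ne hb n)]
    rcases mul_eq_zero.1 this with h | h
    · exact h
    · exact absurd h (Real.exp_pos _).ne'
  have h1 := Finset.card_le_card hsub
  rw [Finset.card_image_of_injective _ (fun x y h => by simpa using h), hc] at h1
  have h2 := (herm b n).roots.toFinset_card_le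
  have h3 := (herm b n).card_roots'
  have h4 := herm_deg b n
  omega

lemma hf_ne {b : ℝ} (hb : 0 < b) (c : ℝ) (n : ℕ) : hf b c n ≠ 0 := by
  intro h
  refine hf_lt hb c n ?_
  simp [h]

lemma hf_LB (b c e : ℝ) : LB (fun x => (b * x - c) ^ 2 - e) := LB.of_continuous (by fun_prop)

lemma hf_ge {b : ℝ} (hb : 0 < b) (c : ℝ) (n : ℕ) : (n : ℕ∞) ≤ {x | hf b c n x = 0}.encard := by
  induction n with
  | zero => simp
  | succ n ih =>
    refine sturm_univ (hf_LB b c _) (hf_sol hb c n) (hf_sol hb c (n+1)) (hf_bd hb c n) (hf_ne hb c n) ?_ ih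
    intro x
    push_cast
    nlinarith

lemma pot_large {B k : ℝ} (hB : 0 < B) {V : ℝ → ℝ} (hV : ∀ x, 0 ≤ V x) (Λ : ℝ) :
    ∃ R, ∀ x, R ≤ |x| → Λ ≤ (B * x - k) ^ 2 + V x := by
  refine ⟨(|k| + |Λ| + 1) / B, fun x hx => ?_⟩
  rw [div_le_iff₀ hB] at hx
  have h1 : |Λ| + 1 ≤ |B * x - k| := by
    have := abs_sub_abs_le_abs_sub (B * x) k
    rw [abs_mul, abs_of_pos hB] at this
    linarith
  have h2 : (|Λ| + 1) ^ 2 ≤ (B * x - k) ^ 2 := by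
    rw [← sq_abs (B * x - k)]
    gcongr
  have := hV x
  have := le_abs_self Λ
  nlinarith [abs_nonneg Λ]

lemma pot_LB (B k e C : ℝ) {V : ℝ → ℝ} (hV : ∀ x, 0 ≤ V x ∧ V x ≤ C) :
    LB (fun x => (B * x - k) ^ 2 + V x - e) := by
  intro R
  obtain ⟨K, hK, h⟩ := hf_LB B k e R
  refine ⟨K + |C|, by positivity, fun x hx => ?_⟩
  have h1 := abs_le.1 (h x hx)
  have := hV x
  have := le_abs_self C
  rw [abs_le]
  constructor <;> linarith [h1.1, h1.2, abs_nonneg C]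

def EF (B : ℝ) (V : ℝ → ℝ) (k e : ℝ) (φ φ' : ℝ → ℝ) : Prop :=
  Sol (fun x => (B * x - k) ^ 2 + V x - e) φ φ' ∧ φ ≠ 0 ∧ Bd φ ∧
    Continuous (fun x => ((B * x - k) ^ 2 + V x - e) * φ x)

lemma eig_EF {B k e : ℝ} (hB : 0 < B) {V : ℝ → ℝ} (hV : ∀ x, 0 ≤ V x)
    (h : IsEigenvalue B V k e) : ∃ φ φ', EF B V k e φ φ' := by
  obtain ⟨φ, hc, h0, hI, he⟩ := h
  have hc1 : ContDiff ℝ 1 (deriv φ) := hc.deriv'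
  have hS : Sol (fun x => (B * x - k) ^ 2 + V x - e) φ (deriv φ) := by
    intro x
    refine ⟨(hc.differentiable (by norm_num) x).hasDerivAt, ?_⟩
    refine ((hc1.differentiable (by norm_num) x).hasDerivAt).congr_deriv ?_
    have := he x
    linarith
  obtain ⟨R, hR⟩ := pot_large (k := k) hB hV e
  refine ⟨φ, deriv φ, hS, h0, hS.bd_of_L2 (R := R) (fun x hx => ?_) hI, ?_⟩
  · have := hR x hx
    linarith
  · have h2 : Continuous (deriv (deriv φ)) := hc1.continuous_deriv (by norm_num)
    refine h2.congr fun x => ?_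
    have := he x
    linarith

lemma EF.fin {B k e : ℝ} (hB : 0 < B) {V : ℝ → ℝ} {C : ℝ} (hV : ∀ x, 0 ≤ V x ∧ V x ≤ C) {φ φ' : ℝ → ℝ}
    (h : EF B V k e φ φ') : {x | φ x = 0}.Finite := by
  obtain ⟨n, hn⟩ := exists_nat_gt (e / B)
  rw [div_lt_iff₀ hB] at hn
  have key : ¬ (n : ℕ∞) ≤ {x | φ x = 0}.encard := by
    intro hN
    refine hf_lt hB k n (sturm_univ (pot_LB B k e C hV) h.1 (hf_sol hB k n) h.2.2.1 h.2.1 ?_ hN)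
    intro x
    have := (hV x).1
    have : (0:ℝ) ≤ n * B := by positivity
    nlinarith
  by_contra hinf
  exact key (by rw [Set.Infinite.encard_eq hinf]; exact le_top)

lemma ncard_succ {s t : Set ℝ} (ht : t.Finite) 
    (h : ∀ N : ℕ, (N : ℕ∞) ≤ s.encard → ((N + 1 : ℕ) : ℕ∞) ≤ t.encard) : s.ncard + 1 ≤ t.ncard := by
  by_cases hs : s.Finite
  · have := h s.ncard (by rw [hs.cast_ncard_eq])
    rw [← ht.cast_ncard_eq] at this
    exact_mod_cast this
  · have hs' : s.encard = ⊤ := Set.Infinite.encard_eq hs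
    have := h t.ncard (by rw [hs']; exact le_top)
    rw [← ht.cast_ncard_eq] at this
    have : t.ncard + 1 ≤ t.ncard := by exact_mod_cast this
    omega

lemma V_cont {B C : ℝ} (hB : 0 < B) {V : ℝ → ℝ} (hV : ∀ x, 0 ≤ V x ∧ V x ≤ C) {e : ℝ → ℝ}
    (he : ∀ k, IsEigenvalue B V k (e k)) : Continuous V := by
  have : ∀ k, ∃ φ φ', EF B V k (e k) φ φ' := fun k => eig_EF hB (fun x => (hV x).1) (he k)
  choose φ φ' hE using this
  rw [continuous_iff_continuousAt]
  intro x₀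
  by_cases hz : ∃ k, φ k x₀ ≠ 0
  · obtain ⟨k, hk⟩ := hz
    have hφc : Continuous (φ k) := (hE k).1.cont
    have hq : ContinuousAt (fun x => ((B * x - k) ^ 2 + V x - e k) * φ k x / φ k x - (B * x - k) ^ 2 + e k) x₀ :=
      (((hE k).2.2.2.continuousAt.div hφc.continuousAt hk).sub (by fun_prop)).add continuousAt_const
    refine hq.congr ?_
    filter_upwards [hφc.continuousAt.eventually_ne hk] with x hx
    field_simp
    ring
  · exfalso
    push Not at hz
    let F : ℝ → ℕ × ℕ := fun k => (({x | φ k x = 0} ∩ Set.Iio x₀).ncard, ({x | φ k x = 0} ∩ Set.Ioi x₀).ncard)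
    have hne : ∀ k k', k < k' → F k ≠ F k' := by
      intro k k' hkk hF
      have hF1 : ({x | φ k x = 0} ∩ Set.Iio x₀).ncard = ({x | φ k' x = 0} ∩ Set.Iio x₀).ncard :=
        congrArg Prod.fst hF
      have hF2 : ({x | φ k x = 0} ∩ Set.Ioi x₀).ncard = ({x | φ k' x = 0} ∩ Set.Ioi x₀).ncard :=
        congrArg Prod.snd hF
      have hf1 := (hE k).fin hB hV
      have hf2 := (hE k').fin hB hV
      have hd : 0 < B * (k' - k) := by have := sub_pos.2 hkk; positivity
      rcases le_total ((B * x₀ - k) ^ 2 - e k) ((B * x₀ - k') ^ 2 - e k') with hle | hle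
      · have := ncard_succ (hf1.inter_of_left (Set.Iio x₀)) (s := {x | φ k' x = 0} ∩ Set.Iio x₀) (fun N hN => 
          sturm (pot_LB B k' (e k') C hV) (hE k').1 (hE k).1 (hE k').2.2.1 (hE k').2.1 isOpen_Iio
            ⟨x₀ - 1, by simp⟩ (fun c hc z hz' => ⟨x₀, ?_, hz k'⟩) (fun x hx => ?_) hN)
        · omega
        · exact Set.mem_uIcc_of_le (le_of_lt hc) (not_lt.1 hz')
        · have : 0 < (B * (k' - k)) * (x₀ - x) := mul_pos hd (sub_pos.2 hx)
          nlinarith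
      · have := ncard_succ (hf2.inter_of_left (Set.Ioi x₀)) (s := {x | φ k x = 0} ∩ Set.Ioi x₀) (fun N hN => 
          sturm (pot_LB B k (e k) C hV) (hE k).1 (hE k').1 (hE k).2.2.1 (hE k).2.1 isOpen_Ioi
            ⟨x₀ + 1, by simp⟩ (fun c hc z hz' => ⟨x₀, ?_, hz k⟩) (fun x hx => ?_) hN)
        · omega
        · exact Set.mem_uIcc_of_ge (not_lt.1 hz') (le_of_lt hc)
        · have : 0 < (B * (k' - k)) * (x - x₀) := mul_pos hd (sub_pos.2 hx)
          nlinarith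
    have hinj : Function.Injective F := by
      intro k k' h
      rcases lt_trichotomy k k' with h1 | h1 | h1
      · exact absurd h (hne _ _ h1)
      · exact h1
      · exact absurd h.symm (hne _ _ h1)
    have : Countable ℝ := hinj.countable
    exact Set.not_countable_univ (Set.countable_univ (α := ℝ))

lemma sol_eig {B k e : ℝ} {V u u' : ℝ → ℝ} (hVc : Continuous V)
    (hs : Sol (fun x => ((B * x - k) ^ 2 + V x) - e) u u') (hu0 : u ≠ 0) (hI : Integrable (fun x => u x ^ 2)) :
    IsEigenvalue B V k e := by
  have hd : deriv u = u' := funext fun x => (hs x).1.deriv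
  have hd' : deriv u' = fun x => ((B * x - k) ^ 2 + V x - e) * u x := funext fun x => (hs x).2.deriv
  have huc := hs.cont
  have h1 : ContDiff ℝ 1 u' := by
    rw [contDiff_one_iff_deriv]
    refine ⟨fun x => (hs x).2.differentiableAt, ?_⟩
    rw [hd']
    fun_prop
  refine ⟨u, ?_, hu0, hI, fun x => ?_⟩
  · have : ContDiff ℝ (1 + 1) u := by
      rw [contDiff_succ_iff_deriv]
      refine ⟨fun x => (hs x).1.differentiableAt, by simp, ?_⟩
      rw [hd]; exact h1
    simpa [one_add_one_eq_two] using this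
  · rw [hd, hd']
    ring

lemma upper {B C k : ℝ} (hB : 0 < B) {V : ℝ → ℝ} (hV : ∀ x, 0 ≤ V x ∧ V x ≤ C) (hVc : Continuous V)
    {w : ℕ → ℝ} (hmono : StrictMono w) (hexh : ∀ e, IsEigenvalue B V k e → ∃ j, e = w j) (j : ℕ) :
    w j ≤ (2 * (j : ℝ) + 1) * B + C := by
  have hWc : Continuous (fun x => (B * x - k) ^ 2 + V x) := by fun_prop
  have hcmp : ∀ (n : ℕ) (e : ℝ) (u u' : ℝ → ℝ), (2 * (n : ℝ) + 1) * B + C < e →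
      Sol (fun x => (B * x - k) ^ 2 + V x - e) u u' → ((n + 1 : ℕ) : ℕ∞) ≤ {x | u x = 0}.encard := by
    intro n e u u' he hu
    refine sturm_univ (hf_LB B k _) (hf_sol hB k n) hu (hf_bd hB k n) (hf_ne hB k n) (fun x => ?_) (hf_ge hB k n)
    have := (hV x).2
    linarith
  have hM : ∀ n, BddAbove (Mset (fun x => (B * x - k) ^ 2 + V x) n) := by
    intro n
    refine ⟨(2 * ((n + 1 : ℕ) : ℝ) + 1) * B + C, fun e he => ?_⟩
    by_contra hlt
    push Not at hlt
    obtain ⟨u, u', hu, h0, h1⟩ := exists_sol (Q := fun x => (B * x - k) ^ 2 + V x - e) (by fun_prop) 0 1 0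
    refine he u u' hu (fun h => ?_) (hcmp (n + 1) e u u' hlt hu)
    rw [h] at h0
    simp at h0
  have hex := fun n => exists_eig (n := n) hWc (fun x => add_nonneg (sq_nonneg _) (hV x).1)
    (fun Λ => pot_large hB (fun x => (hV x).1) Λ) (hM n)
  choose l hl u u' hu hu0 hI hge hlt hup using hex
  have hle : ∀ n, l n ≤ (2 * (n : ℝ) + 1) * B + C := by
    intro n
    by_contra h
    push Not at h
    exact hlt n (hcmp n _ _ _ h (hu n))
  have hidx : ∀ n, ∃ i, l n = w i := fun n => hexh _ (sol_eig hVc (hu n) (hu0 n) (hI n))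
  choose i hi using hidx
  have hne : ∀ n m, n < m → i n ≠ i m := by
    intro n m hnm h
    have hll : l n = l m := by rw [hi, hi, h]
    obtain ⟨v, v', hv, hv0, hvN⟩ := hup m (n + 1) (le_trans (by exact_mod_cast hnm) (hge m))
    rw [← hll] at hv
    exact hl n v v' hv hv0 hvN
  have hinj : Function.Injective i := by
    intro a b h
    rcases lt_trichotomy a b with h1 | h1 | h1
    · exact absurd h (hne _ _ h1)
    · exact h1
    · exact absurd h.symm (hne _ _ h1)
  have : ∃ n ≤ j, j ≤ i n := by
    by_contra hcon
    push Not at hcon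
    have h1 : (Finset.range (j + 1)).image i ⊆ Finset.range j := by
      intro y hy
      obtain ⟨n, hn, rfl⟩ := Finset.mem_image.1 hy
      exact Finset.mem_range.2 (hcon n (Nat.lt_succ_iff.1 (Finset.mem_range.1 hn)))
    have := Finset.card_le_card h1
    rw [Finset.card_image_of_injective _ hinj] at this
    simp at this
  obtain ⟨n, hnj, hjn⟩ := this
  have h1 : w j ≤ w (i n) := hmono.monotone hjn
  have h2 := hle n
  rw [hi n] at h2
  have h3 : (n : ℝ) * B ≤ j * B := by
    have : (n : ℝ) ≤ j := by exact_mod_cast hnj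
    gcongr
  nlinarith

lemma many_zeros {B C k : ℝ} {V : ℝ → ℝ} (hV : ∀ x, 0 ≤ V x ∧ V x ≤ C) {w : ℕ → ℝ}
    (hmono : StrictMono w) {φ φ' : ℕ → ℝ → ℝ} (hE : ∀ j, EF B V k (w j) (φ j) (φ' j)) (j : ℕ) :
    (j : ℕ∞) ≤ {x | φ j x = 0}.encard := by
  induction j with
  | zero => simp
  | succ j ih =>
    refine sturm_univ (pot_LB B k _ C hV) (hE j).1 (hE (j + 1)).1 (hE j).2.2.1 (hE j).2.1 (fun x => ?_) ih
    have := hmono (Nat.lt_succ_self j)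
    simp only [Nat.succ_eq_add_one] at this
    linarith

lemma lower {B C k δ ε : ℝ} (hB : 0 < B) {V : ℝ → ℝ} (hV : ∀ x, 0 ≤ V x ∧ V x ≤ C)
    {w : ℕ → ℝ} (hmono : StrictMono w) (heig : ∀ j, IsEigenvalue B V k (w j)) (j : ℕ)
    (hδ1 : δ < 1)
    (hcmp : ∀ x, ((1 - δ) * B * x - (1 - δ) * k) ^ 2 + C - ε ≤ (B * x - k) ^ 2 + V x) :
    (2 * (j : ℝ) + 1) * ((1 - δ) * B) + C - ε ≤ w j := by
  have : ∀ j, ∃ φ φ', EF B V k (w j) φ φ' := fun j => eig_EF hB (fun x => (hV x).1) (heig j)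
  choose φ φ' hE using this
  by_contra hlt
  push Not at hlt
  have hb : 0 < (1 - δ) * B := mul_pos (by linarith) hB
  refine hf_lt hb ((1 - δ) * k) j (sturm_univ (pot_LB B k _ C hV) (hE j).1 (hf_sol hb _ j) (hE j).2.2.1 (hE j).2.1
    (fun x => ?_) (many_zeros hV hmono hE j))
  have := hcmp x
  linarith

lemma cmp_large {B C δ ε : ℝ} (hB : 0 < B) {V : ℝ → ℝ} (hV : ∀ x, 0 ≤ V x ∧ V x ≤ C)
    (hVlim : Tendsto V (cocompact ℝ) (nhds C)) (hδ : 0 < δ) (hδ1 : δ < 1) (hε : 0 < ε) :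
    ∀ᶠ k in cocompact ℝ, ∀ x, ((1 - δ) * B * x - (1 - δ) * k) ^ 2 + C - ε ≤ (B * x - k) ^ 2 + V x := by
  have h1 : ∀ᶠ x in cocompact ℝ, C - ε < V x := hVlim.eventually_const_lt (by linarith)
  obtain ⟨R, hR0, hR⟩ : ∃ R, 0 ≤ R ∧ ∀ x, R < |x| → C - ε < V x := by
    rw [← Metric.cobounded_eq_cocompact, (Metric.hasBasis_cobounded_compl_closedBall (0:ℝ)).eventually_iff] at h1
    obtain ⟨R, -, hR⟩ := h1
    refine ⟨max R 0, le_max_right _ _, fun x hx => hR ?_⟩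
    have := (le_max_left R 0).trans_lt hx
    simpa using this
  have h3 : ∀ᶠ k : ℝ in cocompact ℝ, B * R + (|C| / δ + 1) ≤ ‖k‖ :=
    tendsto_norm_cocompact_atTop.eventually_ge_atTop _
  filter_upwards [h3] with k hk x
  have e1 : ((1 - δ) * B * x - (1 - δ) * k) ^ 2 = (B * x - k) ^ 2 - (δ * (2 - δ)) * (B * x - k) ^ 2 := by ring
  rw [e1]
  have hp : 0 ≤ (δ * (2 - δ)) * (B * x - k) ^ 2 := by
    have : 0 ≤ 2 - δ := by linarith
    positivity
  rcases lt_or_ge R |x| with hx | hx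
  · have := hR x hx
    linarith
  · have hV0 := (hV x).1
    rw [Real.norm_eq_abs] at hk
    have h4 : |C| / δ + 1 ≤ |B * x - k| := by
      have := abs_sub_abs_le_abs_sub k (B * x)
      rw [abs_mul, abs_of_pos hB, abs_sub_comm] at this
      have : B * |x| ≤ B * R := by gcongr
      linarith
    have h5 : (|C| / δ + 1) ^ 2 ≤ (B * x - k) ^ 2 := by
      rw [← sq_abs (B * x - k)]
      gcongr
    have h6 : 0 ≤ |C| / δ := by positivity
    have h7 : |C| / δ ≤ (B * x - k) ^ 2 := by nlinarith
    have h8 : |C| ≤ δ * (B * x - k) ^ 2 := by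
      rw [div_le_iff₀ hδ] at h7; linarith
    have h9 : δ * (B * x - k) ^ 2 ≤ (δ * (2 - δ)) * (B * x - k) ^ 2 := by
      have : 0 ≤ δ * (1 - δ) * (B * x - k) ^ 2 := by
        have : 0 ≤ 1 - δ := by linarith
        positivity
      nlinarith
    have := le_abs_self C
    linarith

/-- If `0 ≤ V₀ ≤ C` with `V₀(x) → C` as `|x| → ∞` and `0 < C < ∞`, then the `j`-th
dispersion curve of `h₀(k)` satisfies `ω_j(k) → (2j+1)B + C` as `|k| → ∞`. -/
theorem dispersion_curve_limit_bounded (B C : ℝ) (hB : 0 < B) (hC : 0 < C)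
    (V₀ : ℝ → ℝ)
    (hVbdd : ∀ x, 0 ≤ V₀ x ∧ V₀ x ≤ C)
    (hVlim : Tendsto V₀ (cocompact ℝ) (nhds C))
    (ω : ℕ → ℝ → ℝ)
    (hmono : ∀ k, StrictMono (fun j => ω j k))
    (heig : ∀ j k, IsEigenvalue B V₀ k (ω j k))
    (hexh : ∀ k e, IsEigenvalue B V₀ k e → ∃ j, e = ω j k)
    (j : ℕ) :
    Tendsto (fun k => ω j k) (cocompact ℝ) (nhds ((2 * (j : ℝ) + 1) * B + C)) := by
  have hVc : Continuous V₀ := V_cont hB hVbdd (heig 0)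
  have hup : ∀ k, ω j k ≤ (2 * (j : ℝ) + 1) * B + C := fun k =>
    upper hB hVbdd hVc (hmono k) (hexh k) j
  rw [tendsto_order]
  constructor
  · intro a ha
    obtain ⟨η, hη0, hη⟩ : ∃ η, 0 < η ∧ a + 2 * η < (2 * (j : ℝ) + 1) * B + C :=
      ⟨((2 * (j : ℝ) + 1) * B + C - a) / 4, by linarith, by linarith⟩
    have hE : 0 < (2 * (j : ℝ) + 1) * B := by positivity
    obtain ⟨δ, hδ0, hδ1, hδ⟩ : ∃ δ, 0 < δ ∧ δ < 1 ∧ δ * ((2 * (j : ℝ) + 1) * B) ≤ η := by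
      refine ⟨min (1 / 2) (η / ((2 * (j : ℝ) + 1) * B)), by positivity, ?_, ?_⟩
      · exact (min_le_left _ _).trans_lt (by norm_num)
      · rw [← le_div_iff₀ hE]; exact min_le_right _ _
    filter_upwards [cmp_large hB hVbdd hVlim hδ0 hδ1 hη0] with k hk
    have := lower hB hVbdd (hmono k) (fun i => heig i k) j hδ1 hk
    linarith
  · intro a ha
    exact Eventually.of_forall fun k => (hup k).trans_lt ha
end

section
/- Suppose 0 ≤ V₀ ≤ C with V₀(x) → C as |x| → ∞ and 0 < C < ∞. Then for each j ∈ ℕ, inf_{k ∈ ℝ} (ω_{j+1}(k) - ω_j(k)) > 0, i.e. consecutive dispersion curves of h₀(k) are uniformly separated. -/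
open MeasureTheory Filter

lemma le_of_hasDeriv {f f' : ℝ → ℝ} {a b : ℝ} (hab : a ≤ b)
    (h : ∀ x ∈ Set.Icc a b, HasDerivAt f (f' x) x) (h0 : ∀ x ∈ Set.Icc a b, 0 ≤ f' x) :
    f a ≤ f b := by
  have hm : MonotoneOn f (Set.Icc a b) := by
    apply monotoneOn_of_deriv_nonneg (convex_Icc a b)
    · exact fun x hx => (h x hx).continuousAt.continuousWithinAt
    · intro x hx
      exact (h x (interior_subset hx)).differentiableAt.differentiableWithinAt
    · intro x hx
      rw [(h x (interior_subset hx)).deriv]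
      exact h0 x (interior_subset hx)
  exact hm ⟨le_rfl, hab⟩ ⟨hab, le_rfl⟩ hab

lemma not_integrable_of_ge {f : ℝ → ℝ} {a c : ℝ} (hc : 0 < c) (h : ∀ x, a ≤ x → c ≤ f x) :
    ¬ Integrable f := by
  intro hf
  have h1 : IntegrableOn (fun _ : ℝ => c) (Set.Ici a) := by
    refine Integrable.mono (hf.integrableOn) aestronglyMeasurable_const ?_
    rw [ae_restrict_iff' measurableSet_Ici]
    refine Eventually.of_forall fun x hx => ?_
    have := h x hx
    rw [Real.norm_eq_abs, Real.norm_eq_abs, abs_of_pos hc]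
    exact this.trans (le_abs_self _)
  rw [integrableOn_const_iff] at h1
  rcases h1 with h1 | h1
  · exact hc.ne' (by simpa using h1)
  · simp at h1

/-- `p'' = Q p`, `p` square integrable, `dp = p'`. -/
structure Sol_s5 (Q p dp : ℝ → ℝ) : Prop where
  d1 : ∀ x, HasDerivAt p (dp x) x
  d2 : ∀ x, HasDerivAt dp (Q x * p x) x
  int : Integrable (fun x => (p x) ^ 2)

lemma Sol_s5.reflect {Q p dp : ℝ → ℝ} (h : Sol_s5 Q p dp) :
    Sol_s5 (fun x => Q (-x)) (fun x => p (-x)) (fun x => - dp (-x)) := by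
  refine ⟨fun x => ?_, fun x => ?_, ?_⟩
  · have := (h.d1 (-x)).comp x (hasDerivAt_neg x)
    exact HasDerivAt.congr_deriv this (by ring)
  · have := ((h.d2 (-x)).comp x (hasDerivAt_neg x)).neg
    exact HasDerivAt.congr_deriv this (by ring)
  · exact h.int.comp_neg

lemma Sol_s5.smul {Q p dp : ℝ → ℝ} (h : Sol_s5 Q p dp) (c : ℝ) :
    Sol_s5 Q (fun x => c * p x) (fun x => c * dp x) := by
  refine ⟨fun x => (h.d1 x).const_mul c, fun x => ?_, ?_⟩
  · exact ((h.d2 x).const_mul c).congr_deriv (by ring)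
  · have := h.int.const_mul (c ^ 2)
    convert this using 2; ring

lemma Sol_s5.shift {Q p dp : ℝ → ℝ} (h : Sol_s5 Q p dp) (c : ℝ) :
    Sol_s5 (fun x => Q (x + c)) (fun x => p (x + c)) (fun x => dp (x + c)) := by
  refine ⟨fun x => (h.d1 (x + c)).comp_add_const x c, fun x => (h.d2 (x + c)).comp_add_const x c, ?_⟩
  exact h.int.comp_add_right c

lemma Sol_s5.dprod {Q p dp : ℝ → ℝ} (h : Sol_s5 Q p dp) (x : ℝ) :
    HasDerivAt (fun x => p x * dp x) (dp x ^ 2 + Q x * p x ^ 2) x := by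
  exact ((h.d1 x).mul (h.d2 x)).congr_deriv (by ring)

lemma Sol_s5.dsq {Q p dp : ℝ → ℝ} (h : Sol_s5 Q p dp) (x : ℝ) :
    HasDerivAt (fun x => p x ^ 2) (2 * (p x * dp x)) x := by
  exact ((h.d1 x).pow 2).congr_deriv (by push_cast; ring)

lemma Sol_s5.tail1 {Q p dp : ℝ → ℝ} (h : Sol_s5 Q p dp) {a : ℝ} (hQ : ∀ x, a ≤ x → 1 ≤ Q x)
    {x : ℝ} (hx : a ≤ x) : p x * dp x ≤ 0 := by
  by_contra hcon
  push Not at hcon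
  have hg : ∀ y, x ≤ y → p x * dp x ≤ p y * dp y := by
    intro y hy
    refine le_of_hasDeriv (f := fun x => p x * dp x) hy (fun z _ => h.dprod z) fun z hz => ?_
    have := hQ z (hx.trans hz.1)
    positivity
  have hs : ∀ y, x ≤ y → p x ^ 2 ≤ p y ^ 2 := by
    intro y hy
    refine le_of_hasDeriv (f := fun x => p x ^ 2) hy (fun z _ => h.dsq z) fun z hz => ?_
    have := hg z hz.1
    linarith
  have hne : p x ≠ 0 := by
    intro h0; rw [h0] at hcon; simp at hcon
  exact not_integrable_of_ge (by positivity) hs h.int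

lemma Sol_s5.tail2 {Q p dp : ℝ → ℝ} (h : Sol_s5 Q p dp) {a : ℝ} (hQ : ∀ x, a ≤ x → 1 ≤ Q x)
    {x : ℝ} (hx : a ≤ x) : p x ^ 2 + p x * dp x ≤ 0 := by
  by_contra hcon
  push Not at hcon
  refine not_integrable_of_ge hcon (fun y hy => ?_) h.int (a := x)
  have hg : p x ^ 2 + p x * dp x ≤ p y ^ 2 + p y * dp y := by
    refine le_of_hasDeriv (f := fun x => p x ^ 2 + p x * dp x) hy
      (fun z _ => (h.dsq z).add (h.dprod z)) fun z hz => ?_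
    have := hQ z (hx.trans hz.1)
    nlinarith [sq_nonneg (p z + dp z), sq_nonneg (p z)]
  have := h.tail1 hQ (hx.trans hy)
  linarith

lemma Sol_s5.tail_decay {Q p dp : ℝ → ℝ} (h : Sol_s5 Q p dp) {a : ℝ} (hQ : ∀ x, a ≤ x → 1 ≤ Q x)
    {x y : ℝ} (hx : a ≤ x) (hy : x ≤ y) :
    p y ^ 2 ≤ p x ^ 2 * Real.exp (-2 * (y - x)) := by
  have key : -(p x ^ 2 * Real.exp (2 * x)) ≤ -(p y ^ 2 * Real.exp (2 * y)) := by
    refine le_of_hasDeriv (f := fun x => -(p x ^ 2 * Real.exp (2 * x)))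
      (f' := fun x => -(2 * (p x * dp x) * Real.exp (2 * x) + p x ^ 2 * (Real.exp (2 * x) * 2)))
      hy (fun z _ => ?_) fun z hz => ?_
    · have h2 : HasDerivAt (fun x : ℝ => Real.exp (2 * x)) (Real.exp (2 * z) * 2) z := by
        have := ((hasDerivAt_id z).const_mul 2).exp
        simpa using this
      exact ((h.dsq z).mul h2).neg
    · have := h.tail2 hQ (hx.trans hz.1)
      have := Real.exp_pos (2 * z)
      nlinarith
  have e : Real.exp (-2 * (y - x)) = Real.exp (2 * x) * Real.exp (-(2 * y)) := by
    rw [← Real.exp_add]; congr 1; ring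
  rw [e]
  have h3 : p y ^ 2 = p y ^ 2 * Real.exp (2 * y) * Real.exp (-(2 * y)) := by
    rw [mul_assoc, ← Real.exp_add]; simp
  rw [h3, ← mul_assoc]
  exact mul_le_mul_of_nonneg_right (by linarith) (Real.exp_pos _).le

lemma Sol_s5.tail_dp {Q p dp : ℝ → ℝ} (h : Sol_s5 Q p dp) {a : ℝ} (hQ : ∀ x, a ≤ x → 1 ≤ Q x)
    {x y : ℝ} (hx : a ≤ x) (hy : x ≤ y) : dp y ^ 2 ≤ dp x ^ 2 := by
  have : -(dp x ^ 2) ≤ -(dp y ^ 2) := by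
    refine le_of_hasDeriv (f := fun x => -(dp x ^ 2))
      (f' := fun x => -(2 * Q x * (p x * dp x))) hy (fun z _ => ?_) fun z hz => ?_
    · have := ((h.d2 z).pow 2).neg
      exact HasDerivAt.congr_deriv this (by push_cast; ring)
    · have h1 := h.tail1 hQ (hx.trans hz.1)
      have h2 := hQ z (hx.trans hz.1)
      nlinarith
  linarith

lemma Sol_s5.drho {Q p dp : ℝ → ℝ} (h : Sol_s5 Q p dp) (x : ℝ) :
    HasDerivAt (fun x => p x ^ 2 + dp x ^ 2) (2 * (1 + Q x) * (p x * dp x)) x := by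
  have := (h.dsq x).add ((h.d2 x).pow 2)
  exact HasDerivAt.congr_deriv this (by push_cast; ring)

lemma Sol_s5.drho_le {Q p dp : ℝ → ℝ} {Λ x : ℝ} (hQ : |Q x| ≤ Λ) :
    |2 * (1 + Q x) * (p x * dp x)| ≤ (1 + Λ) * (p x ^ 2 + dp x ^ 2) := by
  have h1 : |1 + Q x| ≤ 1 + Λ := by
    rw [abs_le] at *; constructor <;> linarith
  have h2 : |2 * (p x * dp x)| ≤ p x ^ 2 + dp x ^ 2 := by
    rw [abs_le]; constructor <;> nlinarith [sq_nonneg (p x + dp x), sq_nonneg (p x - dp x)]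
  have : 2 * (1 + Q x) * (p x * dp x) = (1 + Q x) * (2 * (p x * dp x)) := by ring
  rw [this, abs_mul]
  exact mul_le_mul h1 h2 (abs_nonneg _) ((abs_nonneg _).trans h1)

lemma hasDerivAt_expc (K z : ℝ) : HasDerivAt (fun x : ℝ => Real.exp (K * x)) (Real.exp (K * z) * K) z := by
  have := ((hasDerivAt_id z).const_mul K).exp
  simpa using this

lemma Sol_s5.gronwall_right {Q p dp : ℝ → ℝ} (h : Sol_s5 Q p dp) {Λ L : ℝ}
    (hQ : ∀ x, |x| ≤ L → |Q x| ≤ Λ) {x : ℝ} (hx : 0 ≤ x) (hxL : x ≤ L) :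
    (p 0 ^ 2 + dp 0 ^ 2) * Real.exp (-(1 + Λ) * x) ≤ p x ^ 2 + dp x ^ 2 ∧
    p x ^ 2 + dp x ^ 2 ≤ (p 0 ^ 2 + dp 0 ^ 2) * Real.exp ((1 + Λ) * x) := by
  have hz : ∀ z ∈ Set.Icc 0 x, |Q z| ≤ Λ := fun z hz => hQ z (by
    rw [abs_of_nonneg hz.1]; exact hz.2.trans hxL)
  have k1 : (p 0 ^ 2 + dp 0 ^ 2) * Real.exp ((1 + Λ) * 0) ≤
      (p x ^ 2 + dp x ^ 2) * Real.exp ((1 + Λ) * x) := by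
    refine le_of_hasDeriv (f := fun x => (p x ^ 2 + dp x ^ 2) * Real.exp ((1 + Λ) * x)) hx
      (fun z _ => (h.drho z).mul (hasDerivAt_expc (1 + Λ) z)) fun z hz' => ?_
    have h1 := abs_le.1 (Sol_s5.drho_le (p := p) (dp := dp) (hz z hz'))
    have := Real.exp_pos ((1 + Λ) * z)
    nlinarith
  have k2 : -((p 0 ^ 2 + dp 0 ^ 2) * Real.exp (-(1 + Λ) * 0)) ≤
      -((p x ^ 2 + dp x ^ 2) * Real.exp (-(1 + Λ) * x)) := by
    refine le_of_hasDeriv (f := fun x => -((p x ^ 2 + dp x ^ 2) * Real.exp (-(1 + Λ) * x))) hx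
      (fun z _ => ((h.drho z).mul (hasDerivAt_expc (-(1 + Λ)) z)).neg) fun z hz' => ?_
    have h1 := abs_le.1 (Sol_s5.drho_le (p := p) (dp := dp) (hz z hz'))
    have := Real.exp_pos (-(1 + Λ) * z)
    nlinarith
  have e : Real.exp ((1 + Λ) * x) * Real.exp (-(1 + Λ) * x) = 1 := by
    rw [← Real.exp_add, ← add_mul]; simp
  simp only [mul_zero, Real.exp_zero, mul_one] at k1 k2
  have p1 := Real.exp_pos ((1 + Λ) * x)
  have p2 := Real.exp_pos (-(1 + Λ) * x)
  constructor
  · calc _ ≤ (p x ^ 2 + dp x ^ 2) * Real.exp ((1 + Λ) * x) * Real.exp (-(1 + Λ) * x) :=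
        mul_le_mul_of_nonneg_right k1 p2.le
      _ = _ := by rw [mul_assoc, e, mul_one]
  · calc _ = (p x ^ 2 + dp x ^ 2) * Real.exp (-(1 + Λ) * x) * Real.exp ((1 + Λ) * x) := by
          rw [mul_assoc, mul_comm (Real.exp _), e, mul_one]
      _ ≤ _ := mul_le_mul_of_nonneg_right (by linarith) p1.le

lemma Sol_s5.gronwall {Q p dp : ℝ → ℝ} (h : Sol_s5 Q p dp) {Λ L : ℝ}
    (hQ : ∀ x, |x| ≤ L → |Q x| ≤ Λ) {x : ℝ} (hxL : |x| ≤ L) :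
    (p 0 ^ 2 + dp 0 ^ 2) * Real.exp (-(1 + Λ) * |x|) ≤ p x ^ 2 + dp x ^ 2 ∧
    p x ^ 2 + dp x ^ 2 ≤ (p 0 ^ 2 + dp 0 ^ 2) * Real.exp ((1 + Λ) * |x|) := by
  rcases le_total 0 x with hx | hx
  · rw [abs_of_nonneg hx] at *
    exact h.gronwall_right hQ hx hxL
  · have := h.reflect.gronwall_right (Λ := Λ) (L := L) (fun y hy => hQ (-y) (by rwa [abs_neg]))
      (x := |x|) (abs_nonneg x) hxL
    simpa [abs_of_nonpos hx] using this

/-- Normalized solutions with uniform bounds. -/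
structure Good (R Λ : ℝ) (Q p dp : ℝ → ℝ) : Prop where
  sol : Sol_s5 Q p dp
  one : p 0 ^ 2 + dp 0 ^ 2 = 1
  bd : ∀ x, |x| ≤ R + 2 → |Q x| ≤ Λ
  ge : ∀ x, R ≤ |x| → 1 ≤ Q x
  lb : ∀ L, ∃ Λ', ∀ x, |x| ≤ L → |Q x| ≤ Λ'

lemma Good.reflect {R Λ : ℝ} {Q p dp : ℝ → ℝ} (h : Good R Λ Q p dp) :
    Good R Λ (fun x => Q (-x)) (fun x => p (-x)) (fun x => - dp (-x)) :=
  ⟨h.sol.reflect, by simpa using h.one, fun x hx => h.bd _ (by rwa [abs_neg]),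
    fun x hx => h.ge _ (by rwa [abs_neg]), fun L => (h.lb L).imp fun _ hm x hx => hm _ (by rwa [abs_neg])⟩

lemma Good.neg {R Λ : ℝ} {Q p dp : ℝ → ℝ} (h : Good R Λ Q p dp) :
    Good R Λ Q (fun x => - p x) (fun x => - dp x) := by
  refine ⟨by simpa using h.sol.smul (-1), by simpa using h.one, h.bd, h.ge, h.lb⟩

noncomputable def cc (R Λ : ℝ) : ℝ := Real.exp (-(1 + Λ) * (R + 2))
noncomputable def CC (R Λ : ℝ) : ℝ := Real.exp ((1 + Λ) * (R + 2))

lemma Good.Λ_nonneg {R Λ : ℝ} {Q p dp : ℝ → ℝ} (h : Good R Λ Q p dp) (hR : 0 < R) : 0 ≤ Λ :=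
  (abs_nonneg _).trans (h.bd 0 (by simp; linarith))

lemma Good.lower {R Λ : ℝ} {Q p dp : ℝ → ℝ} (h : Good R Λ Q p dp) (hR : 0 < R) {x : ℝ}
    (hx : |x| ≤ R + 2) : cc R Λ ≤ p x ^ 2 + dp x ^ 2 := by
  refine le_trans ?_ (h.sol.gronwall h.bd hx).1
  rw [h.one, one_mul, cc]
  have := h.Λ_nonneg hR
  apply Real.exp_le_exp.2
  nlinarith

lemma Good.upper {R Λ : ℝ} {Q p dp : ℝ → ℝ} (h : Good R Λ Q p dp) (hR : 0 < R) {x : ℝ}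
    (hx : |x| ≤ R + 2) : p x ^ 2 + dp x ^ 2 ≤ CC R Λ := by
  refine le_trans (h.sol.gronwall h.bd hx).2 ?_
  rw [h.one, one_mul, CC]
  have := h.Λ_nonneg hR
  apply Real.exp_le_exp.2
  nlinarith

lemma Good.ge' {R Λ : ℝ} {Q p dp : ℝ → ℝ} (h : Good R Λ Q p dp) : ∀ x, R ≤ x → 1 ≤ Q x :=
  fun x hx => h.ge x (hx.trans (le_abs_self x))

lemma Good.decay_right {R Λ : ℝ} {Q p dp : ℝ → ℝ} (h : Good R Λ Q p dp) (hR : 0 < R) {x : ℝ}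
    (hx : 0 ≤ x) : p x ^ 2 ≤ CC R Λ * Real.exp (2 * R) * Real.exp (-2 * x) := by
  have hC : 0 < CC R Λ := Real.exp_pos _
  rw [mul_assoc, ← Real.exp_add]
  rcases le_total x R with h1 | h1
  · have h2 := h.upper hR (x := x) (by rw [abs_of_nonneg hx]; linarith)
    have h3 : 1 ≤ Real.exp (2 * R + -2 * x) := Real.one_le_exp (by linarith)
    nlinarith [sq_nonneg (dp x)]
  · have h2 := h.upper hR (x := R) (by rw [abs_of_pos hR]; linarith)
    have h3 := h.sol.tail_decay h.ge' le_rfl h1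
    refine h3.trans ?_
    have : Real.exp (-2 * (x - R)) = Real.exp (2 * R + -2 * x) := by congr 1; ring
    rw [this]
    exact mul_le_mul_of_nonneg_right (by nlinarith [sq_nonneg (dp R)]) (Real.exp_pos _).le

lemma Good.dp_right {R Λ : ℝ} {Q p dp : ℝ → ℝ} (h : Good R Λ Q p dp) (hR : 0 < R) {x : ℝ}
    (hx : 0 ≤ x) : dp x ^ 2 ≤ CC R Λ := by
  rcases le_total x R with h1 | h1
  · have h2 := h.upper hR (x := x) (by rw [abs_of_nonneg hx]; linarith)
    nlinarith [sq_nonneg (p x)]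
  · have h2 := h.upper hR (x := R) (by rw [abs_of_pos hR]; linarith)
    have h3 := h.sol.tail_dp h.ge' le_rfl h1
    nlinarith [sq_nonneg (p R)]

lemma Good.rho_pos {R Λ : ℝ} {Q p dp : ℝ → ℝ} (h : Good R Λ Q p dp) 
    {x : ℝ} (hx : p x = 0) : dp x ≠ 0 := by
  intro h0
  obtain ⟨Λ', hΛ⟩ := h.lb |x|
  have := (h.sol.gronwall hΛ le_rfl).1
  rw [h.one, hx, h0] at this
  have h3 := Real.exp_pos (-(1 + Λ') * |x|)
  norm_num only at this
  linarith

/-- at `x ∈ [R, R+1]`, `p` is bounded below. -/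
lemma Good.p_lower {R Λ : ℝ} {Q p dp : ℝ → ℝ} (h : Good R Λ Q p dp) (hR : 0 < R) {x : ℝ}
    (hx : R ≤ x) (hx' : x ≤ R + 1) : cc R Λ / 16 ≤ p x ^ 2 := by
  have hc : 0 < cc R Λ := Real.exp_pos _
  by_contra hcon
  push Not at hcon
  obtain ⟨z, hz, hzz⟩ := exists_hasDerivAt_eq_slope p dp (show x < x + 1 by linarith)
    (fun y _ => (h.sol.d1 y).continuousAt.continuousWithinAt) (fun y _ => h.sol.d1 y)
  have h1 := h.sol.tail_decay h.ge' hx (show x ≤ x + 1 by linarith)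
  have h2 := h.sol.tail_decay h.ge' hx hz.1.le
  have e1 : Real.exp (-2 * (x + 1 - x)) ≤ 1 := Real.exp_le_one_iff.2 (by linarith)
  have e2 : Real.exp (-2 * (z - x)) ≤ 1 := Real.exp_le_one_iff.2 (by linarith [hz.1])
  have h3 := h.lower hR (x := z) (by rw [abs_of_pos (by linarith [hz.1])]; linarith [hz.2])
  rw [show x + 1 - x = 1 by ring, div_one] at hzz
  rw [hzz] at h3
  nlinarith [sq_nonneg (p (x+1) + p x), sq_nonneg (p x)]

/-- zeros are inside `(-R, R)` -/
lemma Good.zero_lt {R Λ : ℝ} {Q p dp : ℝ → ℝ} (h : Good R Λ Q p dp) {x : ℝ}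
    (hx : p x = 0) : x < R := by
  by_contra hcon
  push Not at hcon
  have h0 : ∀ y, x ≤ y → p y = 0 := by
    intro y hy
    have := h.sol.tail_decay h.ge' hcon hy
    rw [hx] at this
    nlinarith [sq_nonneg (p y)]
  have h1 : p (x + 1) = 0 := h0 _ (by linarith)
  apply h.rho_pos h1
  have h2 : HasDerivAt (fun _ : ℝ => (0:ℝ)) (dp (x+1)) (x+1) := by
    refine (h.sol.d1 (x+1)).congr_of_eventuallyEq ?_
    filter_upwards [lt_mem_nhds (show x < x + 1 by linarith)] with y hy
    rw [h0 y (le_of_lt hy)]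
  exact h2.unique (hasDerivAt_const _ _)

lemma Good.abs_zero_lt {R Λ : ℝ} {Q p dp : ℝ → ℝ} (h : Good R Λ Q p dp) {x : ℝ}
    (hx : p x = 0) : |x| < R := by
  rw [abs_lt]
  have h1 := h.zero_lt hx
  have h2 := h.reflect.zero_lt (x := -x) (by simpa using hx)
  constructor <;> linarith

noncomputable def AA (R Λ : ℝ) : ℝ := CC R Λ * Real.exp (2 * R)

lemma AA_pos (R Λ : ℝ) : 0 < AA R Λ := mul_pos (Real.exp_pos _) (Real.exp_pos _)

lemma hasDeriv_W {Q₁ p dp Q₂ q dq : ℝ → ℝ} (h1 : Sol_s5 Q₁ p dp) (h2 : Sol_s5 Q₂ q dq) (x : ℝ) :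
    HasDerivAt (fun x => p x * dq x - dp x * q x) ((Q₂ x - Q₁ x) * (p x * q x)) x :=
  (((h1.d1 x).mul (h2.d2 x)).sub ((h1.d2 x).mul (h2.d1 x))).congr_deriv (by ring)

lemma abs_mul_le_half (a b : ℝ) : |a * b| ≤ (a ^ 2 + b ^ 2) / 2 := by
  rw [abs_le]; constructor <;> nlinarith [sq_nonneg (a + b), sq_nonneg (a - b)]

lemma cross_bound {a b e A C : ℝ} (he : 0 < e) (ha : a ^ 2 ≤ A * (e * e)) (hb : b ^ 2 ≤ C) :
    |a * b| ≤ e * (A + C) / 2 := by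
  have h1 : a * b = (a / e) * b * e := by field_simp
  have h2 : (a / e) ^ 2 ≤ A := by
    rw [div_pow, div_le_iff₀ (by positivity)]; nlinarith
  rw [h1, abs_mul, abs_of_pos he]
  have := abs_mul_le_half (a / e) b
  nlinarith

lemma W_tendsto {R Λ : ℝ} (hR : 0 < R) {Q₁ p dp Q₂ q dq : ℝ → ℝ} (h1 : Good R Λ Q₁ p dp)
    (h2 : Good R Λ Q₂ q dq) :
    Tendsto (fun x => p x * dq x - dp x * q x) atTop (nhds 0) := by
  have hb : Tendsto (fun x : ℝ => Real.exp (-x) * (AA R Λ + CC R Λ)) atTop (nhds 0) := by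
    simpa using Real.tendsto_exp_neg_atTop_nhds_zero.mul_const (AA R Λ + CC R Λ)
  refine squeeze_zero_norm' ?_ hb
  filter_upwards [eventually_ge_atTop 0] with x hx
  have e : Real.exp (-2 * x) = Real.exp (-x) * Real.exp (-x) := by
    rw [← Real.exp_add]; congr 1; ring
  have a1 := h1.decay_right hR hx
  have a2 := h2.decay_right hR hx
  rw [e] at a1 a2
  have b1 := cross_bound (Real.exp_pos _) a1 (h2.dp_right hR hx)
  have b2 := cross_bound (Real.exp_pos _) a2 (h1.dp_right hR hx)
  rw [Real.norm_eq_abs]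
  have := abs_sub (p x * dq x) (dp x * q x)
  rw [mul_comm (dp x)] at *
  have e2 : AA R Λ = CC R Λ * Real.exp (2 * R) := rfl
  rw [← e2] at b1 b2
  linarith

lemma W_right {R Λ ε : ℝ} (hR : 0 < R) {Q₁ p dp Q₂ q dq : ℝ → ℝ} (h1 : Good R Λ Q₁ p dp)
    (h2 : Good R Λ Q₂ q dq) (hε : ∀ x, |Q₂ x - Q₁ x| ≤ ε * (1 + |x|)) {x : ℝ} (hx : 0 ≤ x) :
    |p x * dq x - dp x * q x| ≤ ε * AA R Λ := by
  have hA := AA_pos R Λ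
  have hε0 : 0 ≤ ε := by
    have := (abs_nonneg _).trans (hε 0); simpa using this
  have hd : ∀ y, 0 ≤ y → |(Q₂ y - Q₁ y) * (p y * q y)| ≤ ε * AA R Λ * Real.exp (-y) := by
    intro y hy
    have a1 := h1.decay_right hR hy
    have a2 := h2.decay_right hR hy
    have a3 := abs_mul_le_half (p y) (q y)
    have e : Real.exp (-2 * y) = Real.exp (-y) * Real.exp (-y) := by
      rw [← Real.exp_add]; congr 1; ring
    have a4 : |p y * q y| ≤ AA R Λ * (Real.exp (-y) * Real.exp (-y)) := by
      rw [← e, AA]; linarith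
    have a5 := hε y
    rw [abs_of_nonneg hy] at a5
    have a6 : (1 + y) * Real.exp (-y) ≤ 1 := by
      have := Real.add_one_le_exp y
      have e3 : Real.exp y * Real.exp (-y) = 1 := by rw [← Real.exp_add]; simp
      nlinarith [Real.exp_pos (-y)]
    rw [abs_mul]
    calc _ ≤ (ε * (1 + y)) * (AA R Λ * (Real.exp (-y) * Real.exp (-y))) :=
          mul_le_mul a5 a4 (abs_nonneg _) (by positivity)
      _ = ε * AA R Λ * Real.exp (-y) * ((1 + y) * Real.exp (-y)) := by ring
      _ ≤ ε * AA R Λ * Real.exp (-y) * 1 := mul_le_mul_of_nonneg_left a6 (by positivity)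
      _ = _ := by ring
  have hexp : ∀ z : ℝ, HasDerivAt (fun x : ℝ => ε * AA R Λ * Real.exp (-x))
      (-(ε * AA R Λ * Real.exp (-z))) z := fun z => by
    have := ((hasDerivAt_neg z).exp).const_mul (ε * AA R Λ)
    exact this.congr_deriv (by ring)
  set W := fun x => p x * dq x - dp x * q x with hW
  have hex : ε * AA R Λ * Real.exp (-x) ≤ ε * AA R Λ := by
    have : Real.exp (-x) ≤ 1 := Real.exp_le_one_iff.2 (by linarith)
    have h0 : 0 ≤ ε * AA R Λ := by positivity
    nlinarith
  have up : ∀ y, x ≤ y → W x - ε * AA R Λ ≤ W y ∧ W y ≤ W x + ε * AA R Λ := by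
    intro y hy
    have hpos : 0 ≤ ε * AA R Λ * Real.exp (-y) := by have := Real.exp_pos (-y); positivity
    have k1 : W x - ε * AA R Λ * Real.exp (-x) ≤ W y - ε * AA R Λ * Real.exp (-y) := by
      refine le_of_hasDeriv (f := fun x => W x - ε * AA R Λ * Real.exp (-x)) hy
        (fun z _ => (hasDeriv_W h1.sol h2.sol z).sub (hexp z)) fun z hz => ?_
      have := abs_le.1 (hd z (hx.trans hz.1))
      linarith
    have k2 : -W x - ε * AA R Λ * Real.exp (-x) ≤ -W y - ε * AA R Λ * Real.exp (-y) := by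
      refine le_of_hasDeriv (f := fun x => -W x - ε * AA R Λ * Real.exp (-x)) hy
        (fun z _ => (hasDeriv_W h1.sol h2.sol z).neg.sub (hexp z)) fun z hz => ?_
      have := abs_le.1 (hd z (hx.trans hz.1))
      linarith
    constructor <;> linarith
  have lim := W_tendsto hR h1 h2
  have l1 : W x - ε * AA R Λ ≤ 0 := ge_of_tendsto lim
    (by filter_upwards [eventually_ge_atTop x] with y hy using (up y hy).1)
  have l2 : 0 ≤ W x + ε * AA R Λ := le_of_tendsto lim
    (by filter_upwards [eventually_ge_atTop x] with y hy using (up y hy).2)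
  change |W x| ≤ _
  rw [abs_le]; constructor <;> linarith

lemma W_bound {R Λ ε : ℝ} (hR : 0 < R) {Q₁ p dp Q₂ q dq : ℝ → ℝ} (h1 : Good R Λ Q₁ p dp)
    (h2 : Good R Λ Q₂ q dq) (hε : ∀ x, |Q₂ x - Q₁ x| ≤ ε * (1 + |x|)) (x : ℝ) :
    |p x * dq x - dp x * q x| ≤ ε * AA R Λ := by
  rcases le_total 0 x with hx | hx
  · exact W_right hR h1 h2 hε hx
  · have := W_right hR h1.reflect h2.reflect (ε := ε)
      (fun x => by have := hε (-x); rwa [abs_neg] at this) (x := -x) (by linarith)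
    simp only [neg_neg] at this
    rw [← abs_neg]
    convert this using 2; ring

lemma pos_of_ne {f : ℝ → ℝ} {s : Set ℝ} (hs : s.OrdConnected) (hf : Continuous f)
    (hne : ∀ x ∈ s, f x ≠ 0) {a : ℝ} (ha : a ∈ s) (hfa : 0 < f a) : ∀ x ∈ s, 0 < f x := by
  intro x hx
  by_contra hcon
  push Not at hcon
  have := intermediate_value_uIcc (f := f) (a := x) (b := a) hf.continuousOn
  obtain ⟨y, hy, hy0⟩ := this (show (0:ℝ) ∈ Set.uIcc (f x) (f a) from
    Set.mem_uIcc.2 (Or.inl ⟨hcon, hfa.le⟩))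
  exact hne y (hs.uIcc_subset hx ha hy) hy0

lemma Good.cont {R Λ : ℝ} {Q p dp : ℝ → ℝ} (h : Good R Λ Q p dp) : Continuous p :=
  continuous_iff_continuousAt.2 fun x => (h.sol.d1 x).continuousAt

lemma Good.dcont {R Λ : ℝ} {Q p dp : ℝ → ℝ} (h : Good R Λ Q p dp) : Continuous dp :=
  continuous_iff_continuousAt.2 fun x => (h.sol.d2 x).continuousAt

lemma tail_pos {R Λ : ℝ} {Q₁ p dp Q₂ q dq : ℝ → ℝ} (h1 : Good R Λ Q₁ p dp)
    (h2 : Good R Λ Q₂ q dq) (hI : 0 < p R * q R + dp R * dq R) :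
    ∀ x, R ≤ x → 0 < p x * q x := by
  have hp : ∀ x, R ≤ x → p x ≠ 0 := fun x hx h0 => by have := h1.zero_lt h0; linarith
  have hq : ∀ x, R ≤ x → q x ≠ 0 := fun x hx h0 => by have := h2.zero_lt h0; linarith
  have hRR : 0 < p R * q R := by
    by_contra hcon
    push Not at hcon
    have hlt : p R * q R < 0 := lt_of_le_of_ne hcon (mul_ne_zero (hp R le_rfl) (hq R le_rfl))
    have a1 := h1.sol.tail1 h1.ge' le_rfl
    have a2 := h2.sol.tail1 h2.ge' le_rfl
    have a3 : 0 < dp R * dq R := by linarith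
    nlinarith [mul_nonneg_of_nonpos_of_nonpos a1 a2, mul_neg_of_neg_of_pos hlt a3]
  exact pos_of_ne (f := fun x => p x * q x) Set.ordConnected_Ici (h1.cont.mul h2.cont)
    (fun x hx => mul_ne_zero (hp x hx) (hq x hx)) (Set.mem_Ici.2 le_rfl) hRR

lemma spacing_aux {R Λ δ : ℝ} (hR : 0 < R) {Q p dp q dq : ℝ → ℝ} (h1 : Good R Λ Q p dp)
    (h2 : Good R Λ (fun x => Q x + δ) q dq) (hδ : 0 < δ) (hs1 : δ * AA R Λ < cc R Λ)
    (hs2 : δ * (AA R Λ * (2 * R)) < cc R Λ / 16) (hI0 : 0 < p 0 * q 0 + dp 0 * dq 0) : False := by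
  have hA := AA_pos R Λ
  have hc : 0 < cc R Λ := Real.exp_pos _
  have hWb := W_bound hR h1 h2 (ε := δ) (fun x => by
    have := abs_nonneg x
    simp only [add_sub_cancel_left, abs_of_pos hδ]; nlinarith)
  have hdW : ∀ x, HasDerivAt (fun x => p x * dq x - dp x * q x) (δ * (p x * q x)) x := fun x =>
    (hasDeriv_W h1.sol h2.sol x).congr_deriv (by ring)
  have hI : ∀ x ∈ Set.Icc (-R) R, 0 < p x * q x + dp x * dq x := by
    refine pos_of_ne (f := fun x => p x * q x + dp x * dq x) Set.ordConnected_Icc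
      ((h1.cont.mul h2.cont).add (h1.dcont.mul h2.dcont)) (fun x hx h0 => ?_)
      (a := 0) ⟨by linarith, hR.le⟩ hI0
    have hx2 : |x| ≤ R + 2 := (abs_le.2 ⟨hx.1, hx.2⟩).trans (by linarith)
    have l1 := h1.lower hR hx2
    have l2 := h2.lower hR hx2
    have l3 := mul_le_mul l1 l2 hc.le (hc.le.trans l1)
    have l4 := sq_lt_sq' (a := |p x * dq x - dp x * q x|) (b := cc R Λ)
      (by linarith [abs_nonneg (p x * dq x - dp x * q x)]) (by linarith [hWb x])
    rw [sq_abs] at l4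
    have h0' : (p x * q x + dp x * dq x) ^ 2 = 0 := by rw [h0]; ring
    nlinarith
  have hlow : ∀ x ∈ Set.Icc (-R) R, -(δ * AA R Λ) ≤ p x * q x := by
    intro x hx
    have i := hI x hx
    by_contra hcon
    push Not at hcon
    have w := abs_le.1 (hWb x)
    have dpos : 0 < δ * AA R Λ := by positivity
    have k1 : (p x * dq x - dp x * q x) ^ 2 ≤ (δ * AA R Λ) ^ 2 := sq_le_sq' w.1 w.2
    have k2 : (δ * AA R Λ) ^ 2 < (-(p x * q x)) * (dp x * dq x) := by
      have : δ * AA R Λ < dp x * dq x := by linarith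
      rw [sq]
      exact mul_lt_mul'' (by linarith) this dpos.le dpos.le
    nlinarith [sq_nonneg (p x * dq x + dp x * q x)]
  have hT := tail_pos h1 h2 (hI R ⟨by linarith, le_rfl⟩)
  have hT' := tail_pos h1.reflect h2.reflect (by simpa using hI (-R) ⟨le_rfl, by linarith⟩)
  -- limit facts
  have f1 : p (R+1) * dq (R+1) - dp (R+1) * q (R+1) ≤ 0 := by
    refine ge_of_tendsto (W_tendsto hR h1 h2) ?_
    filter_upwards [eventually_ge_atTop (R+1)] with y hy
    refine le_of_hasDeriv (f := fun x => p x * dq x - dp x * q x) hy (fun z _ => hdW z)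
      fun z hz => ?_
    have := hT z (by linarith [hz.1])
    positivity
  have f2 : 0 ≤ p (-R) * dq (-R) - dp (-R) * q (-R) := by
    have lim := W_tendsto hR h1.reflect h2.reflect
    have : p (-R) * (-dq (-R)) - (-dp (-R)) * q (-R) ≤ 0 := by
      refine ge_of_tendsto lim ?_
      filter_upwards [eventually_ge_atTop R] with y hy
      have : p (-y) * dq (-y) - dp (-y) * q (-y) ≤ p (-R) * dq (-R) - dp (-R) * q (-R) := by
        refine le_of_hasDeriv (f := fun x => p x * dq x - dp x * q x) (by linarith)
          (fun z _ => hdW z) fun z hz => ?_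
        have := hT' (-z) (by linarith [hz.2])
        simp only [neg_neg] at this
        positivity
      linarith
    linarith
  have f3 : p (-R) * dq (-R) - dp (-R) * q (-R) + (δ * (δ * AA R Λ)) * (-R) ≤
      p R * dq R - dp R * q R + (δ * (δ * AA R Λ)) * R := by
    refine le_of_hasDeriv (f := fun x => p x * dq x - dp x * q x + (δ * (δ * AA R Λ)) * x)
      (by linarith) (fun z _ => (hdW z).add ((hasDerivAt_id z).const_mul _)) fun z hz => ?_
    have := hlow z hz
    nlinarith
  have f4 : p R * dq R - dp R * q R - (δ * (cc R Λ / 16)) * R ≤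
      p (R+1) * dq (R+1) - dp (R+1) * q (R+1) - (δ * (cc R Λ / 16)) * (R+1) := by
    refine le_of_hasDeriv (f := fun x => p x * dq x - dp x * q x - (δ * (cc R Λ / 16)) * x)
      (by linarith) (fun z _ => (hdW z).sub ((hasDerivAt_id z).const_mul _)) fun z hz => ?_
    have a1 := h1.p_lower hR hz.1 hz.2
    have a2 := h2.p_lower hR hz.1 hz.2
    have a3 := mul_le_mul a1 a2 (by positivity) (by positivity)
    have a4 := hT z hz.1
    have a5 : cc R Λ / 16 ≤ p z * q z := by
      refine (sq_le_sq₀ (by positivity) a4.le).1 ?_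
      nlinarith
    nlinarith
  nlinarith

lemma spacing {R Λ δ : ℝ} (hR : 0 < R) {Q p dp q dq : ℝ → ℝ} (h1 : Good R Λ Q p dp)
    (h2 : Good R Λ (fun x => Q x + δ) q dq) (hδ : 0 < δ) (hs1 : δ * AA R Λ < cc R Λ)
    (hs2 : δ * (AA R Λ * (2 * R)) < cc R Λ / 16) : False := by
  rcases lt_trichotomy (p 0 * q 0 + dp 0 * dq 0) 0 with h | h | h
  · exact spacing_aux hR h1 h2.neg hδ hs1 hs2 (by linarith)
  · have hWb := W_bound hR h1 h2 (ε := δ) (fun x => by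
      have := abs_nonneg x
      simp only [add_sub_cancel_left, abs_of_pos hδ]; nlinarith) 0
    have hc : cc R Λ ≤ 1 := by simpa [h1.one] using h1.lower hR (x := 0) (by simp; linarith)
    have l4 := sq_lt_sq' (a := |p 0 * dq 0 - dp 0 * q 0|) (b := 1)
      (by linarith [abs_nonneg (p 0 * dq 0 - dp 0 * q 0)]) (by linarith)
    rw [sq_abs] at l4
    have h0' : (p 0 * q 0 + dp 0 * dq 0) ^ 2 = 0 := by rw [h]; ring
    have : (p 0 ^ 2 + dp 0 ^ 2) * (q 0 ^ 2 + dq 0 ^ 2) = 1 := by rw [h1.one, h2.one]; ring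
    nlinarith
  · exact spacing_aux hR h1 h2 hδ hs1 hs2 h

noncomputable def SS (R Λ : ℝ) : ℝ := Λ * √(CC R Λ)
noncomputable def eta (R Λ : ℝ) : ℝ := √(cc R Λ) / (4 * (SS R Λ + √(cc R Λ)))

lemma sqrt_cc_pos (R Λ : ℝ) : 0 < √(cc R Λ) := Real.sqrt_pos.2 (Real.exp_pos _)

lemma SS_nonneg {R Λ : ℝ} (hΛ : 0 ≤ Λ) : 0 ≤ SS R Λ := mul_nonneg hΛ (Real.sqrt_nonneg _)

lemma eta_pos {R Λ : ℝ} (hΛ : 0 ≤ Λ) : 0 < eta R Λ := by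
  have := sqrt_cc_pos R Λ
  have := SS_nonneg (R := R) hΛ
  unfold eta; positivity

lemma eta_le {R Λ : ℝ} (hΛ : 0 ≤ Λ) : eta R Λ ≤ 1 := by
  have := sqrt_cc_pos R Λ
  have := SS_nonneg (R := R) hΛ
  unfold eta
  rw [div_le_one (by positivity)]; linarith

lemma SS_eta {R Λ : ℝ} (hΛ : 0 ≤ Λ) : SS R Λ * eta R Λ ≤ √(cc R Λ) / 4 := by
  have := sqrt_cc_pos R Λ
  have := SS_nonneg (R := R) hΛ
  unfold eta
  rw [← mul_div_assoc, div_le_iff₀ (by positivity)]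
  nlinarith

lemma Good.dp_near {R Λ : ℝ} {Q p dp : ℝ → ℝ} (h : Good R Λ Q p dp) (hR : 0 < R) {z x : ℝ}
    (hz : |z| < R) (hx : |x - z| ≤ eta R Λ) : |dp x - dp z| ≤ √(cc R Λ) / 4 := by
  have hΛ := h.Λ_nonneg hR
  have he := eta_le (R := R) hΛ
  refine le_trans ?_ (SS_eta (R := R) hΛ)
  have hb : ∀ y ∈ Metric.closedBall z 1, ‖Q y * p y‖ ≤ SS R Λ := by
    intro y hy
    rw [Metric.mem_closedBall, Real.dist_eq] at hy
    have hy2 : |y| ≤ R + 2 := by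
      have := abs_add_le (y - z) z
      rw [sub_add_cancel] at this; linarith
    rw [Real.norm_eq_abs, abs_mul]
    refine mul_le_mul (h.bd y hy2) ?_ (abs_nonneg _) hΛ
    apply Real.abs_le_sqrt
    have := h.upper hR hy2
    nlinarith [sq_nonneg (dp y)]
  have := Convex.norm_image_sub_le_of_norm_hasDerivWithin_le (f := dp)
    (f' := fun y => Q y * p y) (fun y _ => (h.sol.d2 y).hasDerivWithinAt) hb
    (convex_closedBall z 1) (Metric.mem_closedBall_self zero_le_one)
    (show x ∈ Metric.closedBall z 1 by
      rw [Metric.mem_closedBall, Real.dist_eq]; linarith)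
  rw [Real.norm_eq_abs, Real.norm_eq_abs] at this
  exact this.trans (mul_le_mul_of_nonneg_left hx (SS_nonneg hΛ))

lemma Good.dp_zero {R Λ : ℝ} {Q p dp : ℝ → ℝ} (h : Good R Λ Q p dp) (hR : 0 < R) {z : ℝ}
    (hz : p z = 0) : √(cc R Λ) ≤ |dp z| := by
  apply Real.sqrt_le_iff.2 ⟨abs_nonneg _, ?_⟩
  have := h.lower hR (x := z) (by linarith [h.abs_zero_lt hz])
  rw [hz] at this
  rw [sq_abs]; linarith

lemma Good.sep {R Λ : ℝ} {Q p dp : ℝ → ℝ} (h : Good R Λ Q p dp) (hR : 0 < R) {z z' : ℝ}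
    (hz : p z = 0) (hz' : p z' = 0) (hlt : z < z') : 2 * eta R Λ < z' - z := by
  obtain ⟨c, hc, hc0⟩ := exists_hasDerivAt_eq_zero hlt h.cont.continuousOn (hz.trans hz'.symm)
    (fun x _ => h.sol.d1 x)
  have key : ∀ y, p y = 0 → eta R Λ < |c - y| := by
    intro y hy
    by_contra hcon
    push Not at hcon
    have a := h.dp_near hR (h.abs_zero_lt hy) hcon
    have b := h.dp_zero hR hy
    rw [hc0, zero_sub, abs_neg] at a
    linarith [sqrt_cc_pos R Λ]
  have k1 := key z hz
  have k2 := key z' hz'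
  rw [abs_of_pos (by linarith [hc.1])] at k1
  rw [abs_of_neg (by linarith [hc.2])] at k2
  linarith

/-- a function with small value and large positive derivative has a zero nearby -/
lemma Good.exists_zero_aux {R Λ : ℝ} {Q p dp : ℝ → ℝ} (h : Good R Λ Q p dp) (hR : 0 < R) {z : ℝ}
    (hz : |z| < R) (hv : |p z| < eta R Λ * (√(cc R Λ) / 4)) (hd : √(cc R Λ) / 2 ≤ dp z) :
    ∃ y, |y - z| < eta R Λ ∧ p y = 0 := by
  have hη := eta_pos (R := R) (h.Λ_nonneg hR)
  have hm := sqrt_cc_pos R Λ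
  have hdp : ∀ x, |x - z| ≤ eta R Λ → √(cc R Λ) / 4 ≤ dp x := by
    intro x hx
    have := abs_le.1 (h.dp_near hR hz hx)
    linarith
  have e1 : p z - √(cc R Λ) / 4 * z ≤ p (z + eta R Λ) - √(cc R Λ) / 4 * (z + eta R Λ) := by
    refine le_of_hasDeriv (f := fun x => p x - √(cc R Λ) / 4 * x) (by linarith)
      (fun x _ => (h.sol.d1 x).sub ((hasDerivAt_id x).const_mul _)) fun x hx => ?_
    have := hdp x (abs_le.2 ⟨by linarith [hx.1], by linarith [hx.2]⟩)
    linarith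
  have e2 : p (z - eta R Λ) - √(cc R Λ) / 4 * (z - eta R Λ) ≤ p z - √(cc R Λ) / 4 * z := by
    refine le_of_hasDeriv (f := fun x => p x - √(cc R Λ) / 4 * x) (by linarith)
      (fun x _ => (h.sol.d1 x).sub ((hasDerivAt_id x).const_mul _)) fun x hx => ?_
    have := hdp x (abs_le.2 ⟨by linarith [hx.1], by linarith [hx.2]⟩)
    linarith
  rw [abs_lt] at hv
  obtain ⟨y, hy, hy0⟩ := intermediate_value_Ioo (f := p) (a := z - eta R Λ) (b := z + eta R Λ)
    (by linarith) h.cont.continuousOn (show (0:ℝ) ∈ _ from ⟨by nlinarith, by nlinarith⟩)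
  exact ⟨y, abs_lt.2 ⟨by linarith [hy.1], by linarith [hy.2]⟩, hy0⟩

lemma near_zero {R Λ ε : ℝ} (hR : 0 < R) {Q₁ p dp Q₂ q dq : ℝ → ℝ} (h1 : Good R Λ Q₁ p dp)
    (h2 : Good R Λ Q₂ q dq) (hε : ∀ x, |Q₂ x - Q₁ x| ≤ ε * (1 + |x|))
    (hs : ε * AA R Λ < √(cc R Λ) * (eta R Λ * (√(cc R Λ) / 4))) {z : ℝ} (hz : p z = 0) :
    ∃ y, |y - z| < eta R Λ ∧ q y = 0 := by
  have hm := sqrt_cc_pos R Λ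
  have hW := W_bound hR h1 h2 hε z
  have hzR := h1.abs_zero_lt hz
  rw [hz, zero_mul, zero_sub, abs_neg, abs_mul] at hW
  have hd := h1.dp_zero hR hz
  have hv : |q z| < eta R Λ * (√(cc R Λ) / 4) := by
    by_contra hcon
    push Not at hcon
    have := mul_le_mul hd hcon (by have := eta_pos (R := R) (h1.Λ_nonneg hR); positivity)
      (abs_nonneg _)
    linarith
  have hη := eta_le (R := R) (h1.Λ_nonneg hR)
  have hv' : |q z| < √(cc R Λ) / 4 := by nlinarith
  have hl := h2.lower hR (x := z) (by linarith)
  have hmm : √(cc R Λ) ^ 2 = cc R Λ := Real.sq_sqrt (Real.exp_pos _).le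
  have hdq : √(cc R Λ) / 2 ≤ |dq z| := by
    refine (sq_le_sq₀ (by positivity) (abs_nonneg _)).1 ?_
    rw [← sq_abs (q z), ← sq_abs (dq z)] at hl
    nlinarith [abs_nonneg (q z)]
  rcases le_total 0 (dq z) with h0 | h0
  · rw [abs_of_nonneg h0] at hdq
    exact h2.exists_zero_aux hR hzR hv hdq
  · rw [abs_of_nonpos h0] at hdq
    obtain ⟨y, hy, hy0⟩ := h2.neg.exists_zero_aux hR hzR (by rwa [abs_neg]) hdq
    exact ⟨y, hy, by simpa using hy0⟩

def AtLeast (n : ℕ) (p : ℝ → ℝ) : Prop := ∃ s : Finset ℝ, s.card = n ∧ ∀ z ∈ s, p z = 0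

lemma atLeast_of_near {R Λ ε : ℝ} (hR : 0 < R) {Q₁ p dp Q₂ q dq : ℝ → ℝ} (h1 : Good R Λ Q₁ p dp)
    (h2 : Good R Λ Q₂ q dq) (hε : ∀ x, |Q₂ x - Q₁ x| ≤ ε * (1 + |x|))
    (hs : ε * AA R Λ < √(cc R Λ) * (eta R Λ * (√(cc R Λ) / 4))) {n : ℕ} (hn : AtLeast n p) :
    AtLeast n q := by
  obtain ⟨s, hc, hs0⟩ := hn
  choose! f hf hf0 using fun z (hz : p z = 0) => near_zero hR h1 h2 hε hs hz
  refine ⟨s.image f, ?_, ?_⟩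
  · rw [Finset.card_image_of_injOn, hc]
    intro z hz z' hz' heq
    have hlt : ∀ z z', p z = 0 → p z' = 0 → f z = f z' → ¬ z < z' := by
      intro z z' hz hz' heq hlt
      have a := h1.sep hR hz hz' hlt
      have b := abs_lt.1 (hf z hz)
      have c := abs_lt.1 (hf z' hz')
      rw [heq] at b
      linarith [b.1, b.2, c.1, c.2]
    exact le_antisymm (not_lt.1 (hlt z' z (hs0 _ hz') (hs0 _ hz) heq.symm))
      (not_lt.1 (hlt z z' (hs0 _ hz) (hs0 _ hz') heq))
  · intro y hy
    obtain ⟨z, hz, rfl⟩ := Finset.mem_image.1 hy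
    exact hf0 z (hs0 z hz)

lemma Good.exists_not_atLeast {R Λ : ℝ} {Q p dp : ℝ → ℝ} (h : Good R Λ Q p dp) (hR : 0 < R) :
    ∃ n, ¬ AtLeast n p := by
  have hη := eta_pos (R := R) (h.Λ_nonneg hR)
  set T : Finset ℤ := Finset.Icc ⌊-R / eta R Λ⌋ ⌊R / eta R Λ⌋ with hT
  refine ⟨T.card + 1, ?_⟩
  rintro ⟨s, hc, hs⟩
  obtain ⟨z, hz, z', hz', hne, heq⟩ := Finset.exists_ne_map_eq_of_card_lt_of_maps_to
    (s := s) (t := T) (f := fun z : ℝ => ⌊z / eta R Λ⌋) (by omega) (by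
      intro z hz
      have := abs_lt.1 (h.abs_zero_lt (hs z hz))
      rw [hT, Finset.coe_Icc]
      constructor
      · exact Int.floor_mono (by gcongr; exact this.1.le)
      · exact Int.floor_mono (by gcongr; exact this.2.le))
  have key : |z / eta R Λ - z' / eta R Λ| < 1 := Int.abs_sub_lt_one_of_floor_eq_floor heq
  rw [← sub_div, abs_div, abs_of_pos hη, div_lt_one hη, abs_lt] at key
  rcases lt_or_gt_of_ne hne with hl | hl
  · have := h.sep hR (hs z hz) (hs z' hz') hl
    linarith [key.1]
  · have := h.sep hR (hs z' hz') (hs z hz) hl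
    linarith [key.2]

/-- Sturm: a solution with very negative potential on `[a, a+1]` has a zero there. -/
lemma Sol_s5.osc {Q p dp : ℝ → ℝ} (h : Sol_s5 Q p dp) {a : ℝ}
    (hQ : ∀ x ∈ Set.Icc a (a + 1), Q x ≤ -Real.pi ^ 2) : ∃ z ∈ Set.Icc a (a + 1), p z = 0 := by
  by_contra hcon
  push Not at hcon
  have hcont : Continuous p := continuous_iff_continuousAt.2 fun x => (h.d1 x).continuousAt
  have main : ∀ {p dp : ℝ → ℝ}, Sol_s5 Q p dp → ¬ ∀ x ∈ Set.Icc a (a + 1), 0 < p x := by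
    intro p dp h hp
    have key : -(dp a * Real.sin (Real.pi * (a - a)) -
        p a * (Real.cos (Real.pi * (a - a)) * Real.pi)) ≤
        -(dp (a+1) * Real.sin (Real.pi * (a + 1 - a)) -
          p (a+1) * (Real.cos (Real.pi * (a + 1 - a)) * Real.pi)) := by
      refine le_of_hasDeriv (f := fun x => -(dp x * Real.sin (Real.pi * (x - a)) -
        p x * (Real.cos (Real.pi * (x - a)) * Real.pi)))
        (f' := fun x => (-Real.pi ^ 2 - Q x) * (p x * Real.sin (Real.pi * (x - a))))
        (by linarith) (fun x _ => ?_) fun x hx => ?_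
      · have l : HasDerivAt (fun x => Real.pi * (x - a)) Real.pi x := by
          simpa using ((hasDerivAt_id x).sub_const a).const_mul Real.pi
        have := (((h.d2 x).mul l.sin).sub ((h.d1 x).mul (l.cos.mul_const Real.pi))).neg
        exact this.congr_deriv (by ring)
      · have := hp x hx
        have h2 := hQ x hx
        have h3 : 0 ≤ Real.sin (Real.pi * (x - a)) := by
          apply Real.sin_nonneg_of_nonneg_of_le_pi
          · have := hx.1; have := Real.pi_pos; nlinarith
          · have := hx.2; have := Real.pi_pos; nlinarith
        exact mul_nonneg (by linarith) (by positivity)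
    have h1 := hp a ⟨le_rfl, by linarith⟩
    have h2 := hp (a+1) ⟨by linarith, le_rfl⟩
    simp at key
    nlinarith [Real.pi_pos]
  have ha : a ∈ Set.Icc a (a+1) := ⟨le_rfl, by linarith⟩
  rcases lt_or_gt_of_ne (hcon a ha) with h0 | h0
  · refine main (h.smul (-1)) (pos_of_ne Set.ordConnected_Icc (by fun_prop) (fun x hx => ?_) ha ?_)
    · simpa using hcon x hx
    · simpa using h0
  · exact main h (pos_of_ne Set.ordConnected_Icc hcont hcon ha h0)

def Pot (B : ℝ) (V₀ : ℝ → ℝ) (k E : ℝ) : ℝ → ℝ := fun x => (B * x - k) ^ 2 + V₀ x - E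

lemma eig_sol {B k E : ℝ} {V₀ φ : ℝ → ℝ} (h1 : ContDiff ℝ 2 φ)
    (h2 : Integrable (fun x => (φ x) ^ 2))
    (h3 : ∀ x, -(deriv (deriv φ) x) + ((B * x - k) ^ 2 + V₀ x) * φ x = E * φ x) :
    Sol_s5 (Pot B V₀ k E) φ (deriv φ) := by
  refine ⟨fun x => (h1.differentiable (by norm_num) x).hasDerivAt, fun x => ?_, h2⟩
  have hd : Differentiable ℝ (deriv φ) := by
    have : ContDiff ℝ (1 + 1) φ := by simpa [one_add_one_eq_two] using h1
    exact (contDiff_succ_iff_deriv.1 this).2.2.differentiable (by norm_num)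
  refine (hd x).hasDerivAt.congr_deriv ?_
  have := h3 x
  unfold Pot
  linarith

lemma eig_ge {B k E : ℝ} {V₀ φ dφ : ℝ → ℝ} (hV : ∀ x, 0 ≤ V₀ x)
    (h : Sol_s5 (Pot B V₀ k E) φ dφ) (hne : φ ≠ 0) : -1 ≤ E := by
  by_contra hcon
  push Not at hcon
  apply hne
  have hQ : ∀ x, 1 ≤ Pot B V₀ k E x := fun x => by
    unfold Pot; nlinarith [hV x, sq_nonneg (B * x - k)]
  funext x
  have a := h.tail2 (a := x) (fun y _ => hQ y) le_rfl
  have b := h.reflect.tail2 (a := -x) (fun y _ => hQ (-y)) le_rfl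
  simp only [neg_neg] at b
  simp only [Pi.zero_apply]
  nlinarith [sq_nonneg (φ x)]

noncomputable def RR (B M : ℝ) : ℝ := (M + 3) / B
noncomputable def LL (B C M : ℝ) : ℝ := (B * (RR B M + 2) + 1) ^ 2 + C + M + 1

lemma to_good {B C M k₀ k E : ℝ} (hB : 0 < B) (hM : 0 ≤ M) {V₀ φ dφ : ℝ → ℝ}
    (hV : ∀ x, 0 ≤ V₀ x ∧ V₀ x ≤ C) (h : Sol_s5 (Pot B V₀ k E) φ dφ) (hne : φ ≠ 0)
    (hk : |k - k₀| ≤ 1) (hE : E ≤ M) :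
    ∃ a : ℝ, a ≠ 0 ∧ Good (RR B M) (LL B C M)
      (Pot B (fun x => V₀ (x + k₀ / B)) (k - k₀) E)
      (fun x => a * φ (x + k₀ / B)) (fun x => a * dφ (x + k₀ / B)) := by
  have hE1 := eig_ge (fun x => (hV x).1) h hne
  have hs := h.shift (k₀ / B)
  have hPot : (fun x => Pot B V₀ k E (x + k₀ / B)) =
      Pot B (fun x => V₀ (x + k₀ / B)) (k - k₀) E := by
    funext x
    unfold Pot
    have : B * (x + k₀ / B) - k = B * x - (k - k₀) := by field_simp; ring
    rw [this]
  rw [hPot] at hs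
  have hC : 0 ≤ C := (hV 0).1.trans (hV 0).2
  have hk' := abs_le.1 hk
  have hloc : ∀ L x, |x| ≤ L → |Pot B (fun x => V₀ (x + k₀ / B)) (k - k₀) E x| ≤
      (B * L + 1) ^ 2 + C + M + 1 := by
    intro L x hx
    have hx' := abs_le.1 hx
    have : |B * x - (k - k₀)| ≤ B * L + 1 := by
      rw [abs_le]; constructor <;> nlinarith
    have h2 : (B * x - (k - k₀)) ^ 2 ≤ (B * L + 1) ^ 2 := sq_le_sq' (abs_le.1 this).1 (abs_le.1 this).2
    have h3 := hV (x + k₀ / B)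
    unfold Pot
    rw [abs_le]
    constructor <;> nlinarith [sq_nonneg (B * x - (k - k₀)), h3.1, h3.2]
  set ρ := φ (0 + k₀ / B) ^ 2 + dφ (0 + k₀ / B) ^ 2 with hρ
  have hρ0 : 0 < ρ := by
    refine lt_of_le_of_ne (by positivity) fun h0 => hne ?_
    funext x
    have g := (hs.gronwall (hloc |x - k₀ / B|) le_rfl).2
    simp only [sub_add_cancel] at g
    rw [← hρ, ← h0, zero_mul] at g
    simp only [Pi.zero_apply]
    nlinarith [sq_nonneg (φ x), sq_nonneg (dφ x)]
  have hsq := Real.sqrt_pos.2 hρ0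
  refine ⟨(√ρ)⁻¹, by positivity, hs.smul _, ?_, fun x hx => hloc _ x hx, fun x hx => ?_,
    fun L => ⟨_, hloc L⟩⟩
  · have : ((√ρ)⁻¹ * φ (0 + k₀ / B)) ^ 2 + ((√ρ)⁻¹ * dφ (0 + k₀ / B)) ^ 2 = (√ρ ^ 2)⁻¹ * ρ := by
      rw [hρ]; ring
    rw [this, Real.sq_sqrt hρ0.le, inv_mul_cancel₀ hρ0.ne']
  · have hx2 : M + 3 ≤ B * |x| := by
      rw [RR, div_le_iff₀ hB] at hx; linarith
    have h1 : M + 2 ≤ |B * x - (k - k₀)| := by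
      have := abs_sub_abs_le_abs_sub (B * x) (k - k₀)
      rw [abs_mul, abs_of_pos hB] at this
      linarith
    have h2 : (M + 2) ^ 2 ≤ (B * x - (k - k₀)) ^ 2 := by
      rw [← sq_abs (B * x - (k - k₀))]
      exact pow_le_pow_left₀ (by linarith) h1 2
    have := (hV (x + k₀ / B)).1
    unfold Pot
    nlinarith

lemma RR_pos {B M : ℝ} (hB : 0 < B) (hM : 0 ≤ M) : 0 < RR B M := by unfold RR; positivity

lemma LL_nonneg {B C M : ℝ} (hC : 0 < C) (hM : 0 ≤ M) : 0 ≤ LL B C M := by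
  unfold LL; positivity

lemma atLeast_shift {n : ℕ} {φ : ℝ → ℝ} {a c : ℝ} (ha : a ≠ 0) :
    AtLeast n (fun x => a * φ (x + c)) ↔ AtLeast n φ := by
  constructor
  · rintro ⟨s, hs, h⟩
    refine ⟨s.image (fun x => x + c), ?_, ?_⟩
    · rw [Finset.card_image_of_injective _ (add_left_injective c), hs]
    · intro z hz
      obtain ⟨y, hy, rfl⟩ := Finset.mem_image.1 hz
      simpa [ha] using h y hy
  · rintro ⟨s, hs, h⟩
    refine ⟨s.image (fun x => x - c), ?_, ?_⟩
    · rw [Finset.card_image_of_injective _ (sub_left_injective), hs]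
    · intro z hz
      obtain ⟨y, hy, rfl⟩ := Finset.mem_image.1 hz
      simp [h y hy]

lemma many_zeros_s5 {B C E k : ℝ} (hB : 0 < B) {V₀ φ dφ : ℝ → ℝ}
    (hV : ∀ x, 0 ≤ V₀ x ∧ V₀ x ≤ C) (h : Sol_s5 (Pot B V₀ k E) φ dφ) (n : ℕ)
    (hE : Real.pi ^ 2 + (B * (2 * n + 1)) ^ 2 + C ≤ E) : AtLeast n φ := by
  have hz : ∀ i : ℕ, i < n → ∃ z ∈ Set.Icc (2 * (i:ℝ) + k / B) (2 * (i:ℝ) + k / B + 1), φ z = 0 := by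
    intro i hi
    refine h.osc fun x hx => ?_
    have hi' : (i:ℝ) ≤ n := by exact_mod_cast hi.le
    have hi0 : (0:ℝ) ≤ i := Nat.cast_nonneg i
    have e : B * x - k = B * (x - k / B) := by field_simp
    have b : (B * x - k) ^ 2 ≤ (B * (2 * n + 1)) ^ 2 := by
      rw [e]
      apply pow_le_pow_left₀
      · exact mul_nonneg hB.le (by linarith [hx.1])
      · exact mul_le_mul_of_nonneg_left (by linarith [hx.2]) hB.le
    unfold Pot
    linarith [(hV x).2]
  choose! f hf hf0 using hz
  refine ⟨(Finset.range n).image f, ?_, ?_⟩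
  · rw [Finset.card_image_of_injOn, Finset.card_range]
    intro i hi i' hi' heq
    have a := hf i (by simpa using hi)
    have b := hf i' (by simpa using hi')
    rw [heq] at a
    by_contra hne
    rcases lt_or_gt_of_ne hne with hl | hl
    · have : (i:ℝ) + 1 ≤ i' := by exact_mod_cast hl
      linarith [a.1, a.2, b.1, b.2]
    · have : (i':ℝ) + 1 ≤ i := by exact_mod_cast hl
      linarith [a.1, a.2, b.1, b.2]
  · intro z hz
    obtain ⟨i, hi, rfl⟩ := Finset.mem_image.1 hz
    exact hf0 i (by simpa using hi)

lemma exists_bound {B C : ℝ} (hB : 0 < B) (hC : 0 < C) {V₀ : ℝ → ℝ}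
    (hV : ∀ x, 0 ≤ V₀ x ∧ V₀ x ≤ C) {w : ℝ → ℝ} (hw : Continuous w)
    (heig : ∀ k, IsEigenvalue B V₀ k (w k)) : ∃ M, ∀ k, w k ≤ M := by
  choose φ hφ1 hne hφ2 hφ3 using heig
  have hsol : ∀ k, Sol_s5 (Pot B V₀ k (w k)) (φ k) (deriv (φ k)) := fun k =>
    eig_sol (hφ1 k) (hφ2 k) (hφ3 k)
  have hloc : ∀ n k₀, ∃ δ > 0, ∀ k, |k - k₀| < δ → (AtLeast n (φ k) ↔ AtLeast n (φ k₀)) := by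
    intro n k₀
    set M := |w k₀| + 1 with hM
    have hM0 : 0 ≤ M := by positivity
    have hR := RR_pos hB hM0
    have hL := LL_nonneg (B := B) hC hM0
    set Λ := LL B C M
    set R := RR B M
    have hA := AA_pos R Λ
    have hη := eta_pos (R := R) hL
    have hm := sqrt_cc_pos R Λ
    set τ := √(cc R Λ) * (eta R Λ * (√(cc R Λ) / 4)) with hτ
    have hτ0 : 0 < τ := by positivity
    set ε := min 1 (τ / (2 * (2 * B + 2) * AA R Λ)) with hε
    have hε0 : 0 < ε := by positivity
    have hε1 : ε ≤ 1 := min_le_left _ _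
    have hsmall : ε * (2 * B + 2) * AA R Λ < τ := by
      have : ε ≤ τ / (2 * (2 * B + 2) * AA R Λ) := min_le_right _ _
      rw [le_div_iff₀ (by positivity)] at this
      nlinarith
    obtain ⟨δ, hδ, hδw⟩ := Metric.continuous_iff.1 hw k₀ ε hε0
    refine ⟨min δ ε, by positivity, fun k hk => ?_⟩
    have hk1 : |k - k₀| < δ := hk.trans_le (min_le_left _ _)
    have hk2 : |k - k₀| < ε := hk.trans_le (min_le_right _ _)
    have hwk : |w k - w k₀| < ε := hδw k hk1
    have hwM : w k ≤ M := by
      have := abs_lt.1 hwk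
      have := le_abs_self (w k₀)
      linarith
    obtain ⟨a, ha, ga⟩ := to_good hB hM0 hV (hsol k) (hne k) (k₀ := k₀) (by linarith) hwM
    obtain ⟨b, hb, gb⟩ := to_good hB hM0 hV (hsol k₀) (hne k₀) (k₀ := k₀) (by simp)
      (by linarith [le_abs_self (w k₀)])
    have hd : ∀ x, |Pot B (fun x => V₀ (x + k₀ / B)) (k - k₀) (w k) x -
        Pot B (fun x => V₀ (x + k₀ / B)) (k₀ - k₀) (w k₀) x| ≤ ε * (2 * B + 2) * (1 + |x|) := by
      intro x
      have e : Pot B (fun x => V₀ (x + k₀ / B)) (k - k₀) (w k) x -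
        Pot B (fun x => V₀ (x + k₀ / B)) (k₀ - k₀) (w k₀) x =
          (-(2 * B * x) + (k - k₀)) * (k - k₀) - (w k - w k₀) := by
        unfold Pot; ring
      rw [e]
      have x0 := abs_nonneg x
      calc _ ≤ |(-(2 * B * x) + (k - k₀)) * (k - k₀)| + |w k - w k₀| := abs_sub _ _
        _ ≤ (2 * B * |x| + 1) * ε + ε := by
            rw [abs_mul]
            refine add_le_add (mul_le_mul ?_ hk2.le (abs_nonneg _) (by positivity)) hwk.le
            refine (abs_add_le _ _).trans (add_le_add ?_ (by linarith))
            rw [abs_neg, abs_mul, abs_of_pos (by positivity)]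
        _ ≤ _ := by nlinarith [mul_nonneg hε0.le x0, mul_pos hε0 hB]
    rw [← atLeast_shift (φ := φ k) (c := k₀ / B) ha, ← atLeast_shift (φ := φ k₀) (c := k₀ / B) hb]
    constructor
    · refine atLeast_of_near hR ga gb (fun x => ?_) hsmall
      rw [abs_sub_comm]; exact hd x
    · exact atLeast_of_near hR gb ga hd hsmall
  -- finite at 0
  obtain ⟨n, hn⟩ : ∃ n, ¬ AtLeast n (φ 0) := by
    have hM0 : 0 ≤ |w 0| := abs_nonneg _
    obtain ⟨b, hb, gb⟩ := to_good hB hM0 hV (hsol 0) (hne 0) (k₀ := 0) (by simp) (le_abs_self _)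
    obtain ⟨n, hn⟩ := gb.exists_not_atLeast (RR_pos hB hM0)
    exact ⟨n, by rwa [atLeast_shift hb] at hn⟩
  have hlc : IsLocallyConstant (fun k => AtLeast n (φ k)) := by
    rw [IsLocallyConstant.iff_eventually_eq]
    intro k₀
    obtain ⟨δ, hδ, h⟩ := hloc n k₀
    filter_upwards [Metric.ball_mem_nhds k₀ hδ] with k hk
    exact propext (h k hk)
  refine ⟨Real.pi ^ 2 + (B * (2 * n + 1)) ^ 2 + C, fun k => ?_⟩
  by_contra hcon
  push Not at hcon
  have h1 := many_zeros_s5 hB hV (hsol k) n hcon.le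
  have h2 : AtLeast n (φ k) = AtLeast n (φ 0) := hlc.apply_eq_of_preconnectedSpace k 0
  exact hn (h2 ▸ h1)

/-- If `0 ≤ V₀ ≤ C` with `V₀(x) → C` as `|x| → ∞`, `0 < C < ∞`, then consecutive
dispersion curves of `h₀(k)` are uniformly separated:
`inf_{k ∈ ℝ} (ω_{j+1}(k) - ω_j(k)) > 0`. -/
theorem dispersion_curves_uniformly_separated (B C : ℝ) (hB : 0 < B) (hC : 0 < C)
    (V₀ : ℝ → ℝ)
    (hVbdd : ∀ x, 0 ≤ V₀ x ∧ V₀ x ≤ C)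
    (hVlim : Tendsto V₀ (cocompact ℝ) (nhds C))
    (ω : ℕ → ℝ → ℝ)
    (hcont : ∀ j, Continuous (ω j))
    (hmono : ∀ k, StrictMono (fun j => ω j k))
    (heig : ∀ j k, IsEigenvalue B V₀ k (ω j k))
    (hexh : ∀ k e, IsEigenvalue B V₀ k e → ∃ j, e = ω j k)
    (j : ℕ) :
    ∃ d > 0, ∀ k : ℝ, d ≤ ω (j + 1) k - ω j k := by
  obtain ⟨M', hM'⟩ := exists_bound hB hC hVbdd (hcont (j + 1)) (heig (j + 1))
  set M := max M' 0 with hM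
  have hM0 : 0 ≤ M := le_max_right _ _
  have hR := RR_pos hB hM0
  set Λ := LL B C M
  set R := RR B M
  have hA := AA_pos R Λ
  have hc : 0 < cc R Λ := Real.exp_pos _
  refine ⟨min (cc R Λ / (2 * AA R Λ)) (cc R Λ / 16 / (2 * (AA R Λ * (2 * R)))), by positivity,
    fun k => ?_⟩
  by_contra hcon
  push Not at hcon
  have hlt : ω j k < ω (j + 1) k := hmono k (Nat.lt_succ_self j)
  obtain ⟨φ, p1, p2, p3, p4⟩ := heig (j + 1) k
  obtain ⟨ψ, q1, q2, q3, q4⟩ := heig j k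
  have hle : ω (j + 1) k ≤ M := (hM' k).trans (le_max_left _ _)
  obtain ⟨a, ha, ga⟩ := to_good hB hM0 hVbdd (eig_sol p1 p3 p4) p2 (k₀ := k) (by simp) hle
  obtain ⟨b, hb, gb⟩ := to_good hB hM0 hVbdd (eig_sol q1 q3 q4) q2 (k₀ := k) (by simp)
    (hlt.le.trans hle)
  have hQ : Pot B (fun x => V₀ (x + k / B)) (k - k) (ω j k) = fun x =>
      Pot B (fun x => V₀ (x + k / B)) (k - k) (ω (j + 1) k) x + (ω (j + 1) k - ω j k) := by
    funext x; unfold Pot; ring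
  rw [hQ] at gb
  have c1 := hcon.trans_le (min_le_left _ _)
  have c2 := hcon.trans_le (min_le_right _ _)
  rw [lt_div_iff₀ (by positivity)] at c1 c2
  have hδ : 0 < ω (j + 1) k - ω j k := by linarith
  have d1 : 0 < (ω (j + 1) k - ω j k) * AA R Λ := by positivity
  have d2 : 0 < (ω (j + 1) k - ω j k) * (AA R Λ * (2 * R)) := by positivity
  exact spacing hR ga gb hδ (by linarith) (by linarith)
end
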